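/- Let Î : M₁(E) → [0,∞] be defined by Î(μ) := sup_{φ∈C(E)} { −∫∫ μ(dx)c(x,dy) [e^{φ(y)−φ(x)} − 1] }. As T → ∞ the family {P_x ∘ μ_T^{-1}}_{T>0} satisfies, uniformly with respect to x bounded away from E₀, a large deviation principle with convex rate function Î. -/

import Mathlib

open MeasureTheory ProbabilityTheory Filter Topology Set ENNReal

noncomputable section

/-- The data of transition rates `c(x,dy) = r(x) p(x,y) λ(dy)` on a state space `E`,
satisfying Assumption 1.1 (i)-(iii): `r` is continuous and nonnegative, `λ` is a probability
measure which is strictly positive on open sets, `p` is a strictly positive continuous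
transition density, and `1/r` is `λ`-integrable. -/
structure ChainSetting (E : Type*) [MeasurableSpace E] [TopologicalSpace E] where
  r : E → ℝ
  r_cont : Continuous r
  r_nonneg : ∀ x, 0 ≤ r x
  lam : Measure E
  lam_prob : IsProbabilityMeasure lam
  lam_pos : ∀ U : Set E, IsOpen U → U.Nonempty → 0 < lam U
  p : E → E → ℝ
  p_cont : Continuous fun z : E × E => p z.1 z.2
  p_pos : ∀ x y, 0 < p x y
  p_int : ∀ x, ∫ y, p x y ∂lam = 1
  inv_r_int : ∫⁻ x, (ENNReal.ofReal (r x))⁻¹ ∂lam ≠ ∞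

namespace ChainSetting

variable {E : Type*} [MeasurableSpace E] [TopologicalSpace E] (S : ChainSetting E)

/-- The (closed) set `E₀ = {x : r(x) = 0}` of absorbing states. -/
def E0 : Set E := {x | S.r x = 0}

/-- The skeleton transition probability `p(x,dy) = p(x,y) λ(dy)`. -/
def skel (x : E) : Measure E := S.lam.withDensity fun y => ENNReal.ofReal (S.p x y)

/-- The jump rates `c(x,dy) = r(x) p(x,y) λ(dy)`. -/
def cMeas (x : E) : Measure E := S.lam.withDensity fun y => ENNReal.ofReal (S.r x * S.p x y)

/-- The measure `μ(dx) c(x,dy)` on `E × E`. -/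
def muc (μ : Measure E) : Measure (E × E) :=
  (μ.prod S.lam).withDensity fun z => ENNReal.ofReal (S.r z.1 * S.p z.1 z.2)

/-- The invariant probability `π(dx) = π₀(1/r)⁻¹ π₀(dx)/r(x)` of the continuous-time chain,
built from the invariant probability `π₀` of the skeleton, cf. (1.2). -/
def piMeas (π₀ : Measure E) : Measure E :=
  (∫⁻ x, (ENNReal.ofReal (S.r x))⁻¹ ∂π₀)⁻¹ •
    π₀.withDensity fun x => (ENNReal.ofReal (S.r x))⁻¹

/-- Assumption 1.1 (iv): with `A_δ = {r < δ}`, there is a sequence `δ_n → 0` with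
`λ(A_{2δ_n}) ≤ C λ(A_{2δ_n} \ A_{δ_n})`. -/
def CondIV : Prop :=
  ∃ δ : ℕ → ℝ, (∀ n, 0 < δ n) ∧ Tendsto δ atTop (𝓝 0) ∧
    ∃ C : ℝ≥0∞, C ≠ ∞ ∧ ∀ n,
      S.lam {x | S.r x < 2 * δ n} ≤ C * S.lam ({x | S.r x < 2 * δ n} \ {x | S.r x < δ n})

end ChainSetting

/-- Trajectories of the jump process: the skeleton chain `ω.1` together with the holding
times `ω.2` (with value `∞` allowed, corresponding to absorption). -/
abbrev Traj (E : Type*) := (ℕ → E) × (ℕ → ℝ≥0∞)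

namespace Traj

variable {E : Type*}

/-- The jump times `T_n = τ_0 + ⋯ + τ_{n-1}`. -/
def jumpTime (n : ℕ) (ω : Traj E) : ℝ≥0∞ := ∑ i ∈ Finset.range n, ω.2 i

/-- The position at time `t`: `X_t = Z_n` for `T_n ≤ t < T_{n+1}`. -/
def pos (t : ℝ) (ω : Traj E) : E := ω.1 (sInf {n | ENNReal.ofReal t < jumpTime (n + 1) ω})

end Traj

/-- The exponential law of parameter `ρ`, as a measure on `ℝ≥0∞`; for `ρ ≤ 0` it is the Dirac
mass at `∞` (infinite holding time at an absorbing state). -/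
def expMeasE (ρ : ℝ) : Measure ℝ≥0∞ :=
  if 0 < ρ then
    Measure.map ENNReal.ofReal
      (MeasureTheory.volume.withDensity fun s =>
        Set.indicator (Set.Ioi (0 : ℝ)) (fun s => ENNReal.ofReal (ρ * Real.exp (-(ρ * s)))) s)
  else Measure.dirac ∞

/-- `P` is the law of the continuous-time Markov chain with holding rates `ρ` and skeleton
transition kernel `κ`, started at `x`: the skeleton `ω.1` is a Markov chain with kernel `κ`
started at `x`, and conditionally on the skeleton the holding times `ω.2 i` are independent
exponential random variables of parameters `ρ(Z_i)`. -/
structure IsChainLaw {E : Type*} [MeasurableSpace E]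
    (ρ : E → ℝ) (κ : E → Measure E) (x : E) (P : Measure (Traj E)) : Prop where
  prob : IsProbabilityMeasure P
  init : P.map (fun ω => ω.1 0) = Measure.dirac x
  markov : ∀ (n : ℕ) (f : (Fin (n + 1) → E) → ℝ≥0∞) (g : E → ℝ≥0∞),
    Measurable f → Measurable g →
    ∫⁻ ω, f (fun i => ω.1 i) * g (ω.1 (n + 1)) ∂P
      = ∫⁻ ω, f (fun i => ω.1 i) * ∫⁻ y, g y ∂κ (ω.1 n) ∂P
  holding : ∀ (n : ℕ) (f : (ℕ → E) → ℝ≥0∞) (g : Fin n → ℝ≥0∞ → ℝ≥0∞),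
    Measurable f → (∀ i, Measurable (g i)) →
    ∫⁻ ω, f ω.1 * ∏ i : Fin n, g i (ω.2 i) ∂P
      = ∫⁻ ω, f ω.1 * ∏ i : Fin n, ∫⁻ s, g i s ∂expMeasE (ρ (ω.1 i)) ∂P

/-- The empirical measure `μ_T` of (2.2), as a measure on `E`. -/
def empMeas {E : Type*} [MeasurableSpace E] (T : ℝ) (ω : Traj E) : Measure E :=
  (ENNReal.ofReal T)⁻¹ •
    Measure.map (fun t => Traj.pos t ω) (MeasureTheory.volume.restrict (Set.Ioc 0 T))

open Classical in
/-- The empirical flow `Q_T`, as a measure on `E × E`: `(1/T)` times the sum of the Dirac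
masses at the jumps `(X_{t⁻}, X_t)` occurring at times `t ∈ [0,T]`. -/
def empFlow {E : Type*} [MeasurableSpace E] (T : ℝ) (ω : Traj E) : Measure (E × E) :=
  (ENNReal.ofReal T)⁻¹ • Measure.sum fun n : ℕ =>
    if Traj.jumpTime (n + 1) ω ≤ ENNReal.ofReal T ∧ ω.1 n ≠ ω.1 (n + 1)
    then Measure.dirac (ω.1 n, ω.1 (n + 1)) else 0

open Classical in
/-- Bundle a measure as a probability measure (junk value if it is not one). -/
def toPM {α : Type*} [MeasurableSpace α] [Nonempty α] (μ : Measure α) : ProbabilityMeasure α :=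
  if h : IsProbabilityMeasure μ then ⟨μ, h⟩
  else ⟨Measure.dirac (Classical.arbitrary α), by infer_instance⟩

open Classical in
/-- Bundle a measure as a finite measure (junk value if it is not one). -/
def toFM {α : Type*} [MeasurableSpace α] (μ : Measure α) : FiniteMeasure α :=
  if h : IsFiniteMeasure μ then ⟨μ, h⟩ else 0

/-- The pair empirical measure–empirical flow `(μ_T, Q_T)`, as a random element of
`M₁(E) × M₊(E×E)`. -/
def empPair {E : Type*} [MeasurableSpace E] [Nonempty E] (T : ℝ) (ω : Traj E) :
    ProbabilityMeasure E × FiniteMeasure (E × E) :=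
  (toPM (empMeas T ω), toFM (empFlow T ω))

/-- The convex function `Ψ(a) = a log a - (a - 1)` (with `Ψ(0) = 1`), extended to `ℝ≥0∞`. -/
def PsiE (a : ℝ≥0∞) : ℝ≥0∞ :=
  if a = ∞ then ∞ else ENNReal.ofReal (a.toReal * Real.log a.toReal - a.toReal + 1)

open Classical in
/-- The joint rate functional `I(μ,Q)` of (2.3):
`I(μ,Q) = ∫∫ μ(dx)c(x,dy) Ψ(dQ/(μ(dx)c(x,dy)))` if the two marginals of `Q` coincide and
`Q ≪ μ(dx)c(x,dy)`, and `+∞` otherwise. -/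
def ChainSetting.rateI0 {E : Type*} [MeasurableSpace E] [TopologicalSpace E]
    (S : ChainSetting E) (μ : Measure E) (Q : Measure (E × E)) : ℝ≥0∞ :=
  if Q.fst = Q.snd ∧ Q ≪ S.muc μ
  then ∫⁻ z, PsiE (Q.rnDeriv (S.muc μ) z) ∂(S.muc μ)
  else ∞

/-- The joint rate functional `I` on `M₁(E) × M₊(E×E)`. -/
def ChainSetting.rateI {E : Type*} [MeasurableSpace E] [TopologicalSpace E]
    (S : ChainSetting E) (q : ProbabilityMeasure E × FiniteMeasure (E × E)) : ℝ≥0∞ :=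
  S.rateI0 (q.1 : Measure E) (q.2 : Measure (E × E))

/-- The Donsker-Varadhan functional
`Î(μ) = sup_{φ ∈ C(E)} { -∫∫ μ(dx)c(x,dy) [e^{φ(y)-φ(x)} - 1] }`. -/
def ChainSetting.Ihat0 {E : Type*} [MeasurableSpace E] [TopologicalSpace E]
    (S : ChainSetting E) (μ : Measure E) : ℝ≥0∞ :=
  ⨆ φ : C(E, ℝ), ENNReal.ofReal (-∫ z : E × E, (Real.exp (φ z.2 - φ z.1) - 1) ∂S.muc μ)

variable {E : Type*} [MeasurableSpace E] [TopologicalSpace E] [PolishSpace E]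
  [CompactSpace E] [BorelSpace E] [Nonempty E]

set_option linter.unusedSectionVars false

section Paths

lemma jt_succ {F : Type*} (n : ℕ) (ω : Traj F) :
    Traj.jumpTime (n + 1) ω = Traj.jumpTime n ω + ω.2 n := by
  simp [Traj.jumpTime, Finset.sum_range_succ]

lemma jt_mono {F : Type*} (ω : Traj F) : Monotone (fun n => Traj.jumpTime n ω) := by
  refine monotone_nat_of_le_succ fun n => ?_
  rw [jt_succ]; exact le_self_add

lemma pos_eq {F : Type*} (n : ℕ) (t : ℝ) (ω : Traj F) (h1 : Traj.jumpTime n ω ≤ ENNReal.ofReal t)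
    (h2 : ENNReal.ofReal t < Traj.jumpTime (n + 1) ω) : Traj.pos t ω = ω.1 n := by
  unfold Traj.pos
  apply congrArg
  apply le_antisymm
  · exact Nat.sInf_le h2
  · refine le_csInf ⟨n, h2⟩ fun m hm => ?_
    by_contra hlt
    push Not at hlt
    have := jt_mono ω (show m + 1 ≤ n by omega)
    exact absurd (lt_of_lt_of_le hm (this.trans h1)) (lt_irrefl _)

lemma measurable_pos {F : Type*} [MeasurableSpace F] (ω : Traj F) :
    Measurable (fun t => Traj.pos t ω) := by
  have hN : Measurable (fun t : ℝ => sInf {n | ENNReal.ofReal t < Traj.jumpTime (n + 1) ω}) := by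
    have key : ∀ m : ℕ, MeasurableSet {t : ℝ | ENNReal.ofReal t < Traj.jumpTime (m + 1) ω} :=
      fun m => measurableSet_lt ENNReal.measurable_ofReal measurable_const
    by_cases hall : True
    · classical
      refine measurable_of_Iic fun k => ?_
      have : (fun t : ℝ => sInf {n | ENNReal.ofReal t < Traj.jumpTime (n + 1) ω}) ⁻¹' Iic k
          = (⋃ m ∈ Iic k, {t : ℝ | ENNReal.ofReal t < Traj.jumpTime (m + 1) ω}) ∪
            (⋃ m, {t : ℝ | ENNReal.ofReal t < Traj.jumpTime (m + 1) ω})ᶜ := by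
        ext t
        simp only [mem_preimage, mem_Iic, mem_union, mem_iUnion, mem_ofPred_eq, mem_compl_iff,
          not_exists, exists_prop]
        constructor
        · intro h
          by_cases he : ∃ m, ENNReal.ofReal t < Traj.jumpTime (m + 1) ω
          · left
            exact ⟨_, h, Nat.sInf_mem (s := {n | ENNReal.ofReal t < Traj.jumpTime (n + 1) ω}) he⟩
          · right; simpa using he
        · rintro (⟨m, hm, hlt⟩ | h)
          · exact (Nat.sInf_le hlt).trans hm
          · have : {n | ENNReal.ofReal t < Traj.jumpTime (n + 1) ω} = ∅ := by
              ext m; simpa using h m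
            simp [this]
      rw [this]
      refine MeasurableSet.union ?_ (MeasurableSet.iUnion key).compl
      exact MeasurableSet.biUnion (to_countable _) fun m _ => key m
    · exact absurd trivial hall
  exact (measurable_from_nat (f := ω.1)).comp hN

lemma empMeas_prob {F : Type*} [MeasurableSpace F] {T : ℝ} (hT : 0 < T) (ω : Traj F) :
    IsProbabilityMeasure (empMeas T ω) := by
  constructor
  simp only [empMeas, Measure.smul_apply, smul_eq_mul]
  rw [Measure.map_apply (measurable_pos ω) MeasurableSet.univ]
  simp
  exact ENNReal.inv_mul_cancel (by simpa using hT) (by simp)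

lemma toPM_coe {F : Type*} [MeasurableSpace F] [Nonempty F] {T : ℝ} (hT : 0 < T) (ω : Traj F) :
    ((toPM (empMeas T ω) : ProbabilityMeasure F) : Measure F) = empMeas T ω := by
  have h : toPM (empMeas T ω) = ⟨empMeas T ω, empMeas_prob hT ω⟩ :=
    dif_pos (empMeas_prob hT ω)
  rw [h]
  rfl

lemma integral_toPM {T : ℝ} (hT : 0 < T) (ω : Traj E) (f : C(E, ℝ)) :
    ∫ x, f x ∂((toPM (empMeas T ω) : ProbabilityMeasure E) : Measure E)
      = T⁻¹ * ∫ t in (0 : ℝ)..T, f (Traj.pos t ω) := by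
  rw [toPM_coe hT, empMeas, integral_smul_measure, intervalIntegral.integral_of_le hT.le,
    integral_map (measurable_pos ω).aemeasurable f.continuous.aestronglyMeasurable]
  simp [ENNReal.toReal_inv, ENNReal.toReal_ofReal hT.le]

lemma pos_intble (f : C(E, ℝ)) (ω : Traj E) (a b : ℝ) :
    IntervalIntegrable (fun t => f (Traj.pos t ω)) volume a b := by
  rw [intervalIntegrable_iff]
  refine Measure.integrableOn_of_bounded (M := ‖f‖) (by simp) ?_ ?_
  · exact (f.continuous.measurable.comp (measurable_pos ω)).aestronglyMeasurable
  · exact Filter.Eventually.of_forall fun t => f.norm_coe_le_norm _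

lemma integral_pos_seg (f : C(E, ℝ)) (ω : Traj E) (n : ℕ) (hn : Traj.jumpTime n ω ≠ ∞) (T : ℝ)
    (h1 : (Traj.jumpTime n ω).toReal ≤ T) (h2 : ENNReal.ofReal T ≤ Traj.jumpTime (n + 1) ω) :
    ∫ t in (Traj.jumpTime n ω).toReal..T, f (Traj.pos t ω)
      = (T - (Traj.jumpTime n ω).toReal) * f (ω.1 n) := by
  rw [intervalIntegral.integral_of_le h1, integral_Ioc_eq_integral_Ioo]
  rw [setIntegral_congr_fun (g := fun _ => f (ω.1 n)) measurableSet_Ioo]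
  · simp [Measure.real, h1]
  · intro t ht
    simp only
    rw [pos_eq n t ω]
    · rw [← ENNReal.ofReal_toReal hn]
      exact ENNReal.ofReal_le_ofReal ht.1.le
    · refine lt_of_lt_of_le ?_ h2
      have h0 : 0 ≤ (Traj.jumpTime n ω).toReal := ENNReal.toReal_nonneg
      exact (ENNReal.ofReal_lt_ofReal_iff (by linarith [ht.1, ht.2])).2 ht.2

lemma integral_pos (f : C(E, ℝ)) (ω : Traj E) (n : ℕ) (hn : Traj.jumpTime n ω ≠ ∞) :
    ∫ t in (0 : ℝ)..(Traj.jumpTime n ω).toReal, f (Traj.pos t ω)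
      = ∑ i ∈ Finset.range n, (ω.2 i).toReal * f (ω.1 i) := by
  induction n with
  | zero => simp [Traj.jumpTime]
  | succ n ih =>
    have hs := jt_succ n ω
    have hn' : Traj.jumpTime n ω ≠ ∞ := fun h => hn (by rw [hs, h]; simp)
    have ht : ω.2 n ≠ ∞ := fun h => hn (by rw [hs, h]; simp)
    rw [← intervalIntegral.integral_add_adjacent_intervals (pos_intble f ω _ _)
      (pos_intble f ω (Traj.jumpTime n ω).toReal _), ih hn', Finset.sum_range_succ,
      integral_pos_seg f ω n hn']
    · rw [hs, ENNReal.toReal_add hn' ht]; ring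
    · rw [hs, ENNReal.toReal_add hn' ht]; linarith [ENNReal.toReal_nonneg (a := ω.2 n)]
    · rw [ENNReal.ofReal_toReal hn]

lemma integral_pos' (f : C(E, ℝ)) (ω : Traj E) (n : ℕ) (T : ℝ) (hT : 0 ≤ T)
    (h1 : Traj.jumpTime n ω ≤ ENNReal.ofReal T) (h2 : ENNReal.ofReal T < Traj.jumpTime (n + 1) ω) :
    ∫ t in (0 : ℝ)..T, f (Traj.pos t ω)
      = (∑ i ∈ Finset.range n, (ω.2 i).toReal * f (ω.1 i))
        + (T - (Traj.jumpTime n ω).toReal) * f (ω.1 n) := by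
  have hn : Traj.jumpTime n ω ≠ ∞ := (h1.trans_lt ENNReal.ofReal_lt_top).ne
  rw [← intervalIntegral.integral_add_adjacent_intervals (pos_intble f ω _ _)
      (pos_intble f ω (Traj.jumpTime n ω).toReal _), integral_pos f ω n hn,
      integral_pos_seg f ω n hn T _ h2.le]
  exact ENNReal.toReal_le_of_le_ofReal hT h1

lemma integral_pos_near (f : C(E, ℝ)) (ω : Traj E) (n : ℕ) (T : ℝ) (hT : 0 ≤ T)
    (h1 : Traj.jumpTime n ω ≤ ENNReal.ofReal T) :
    |(∫ t in (0 : ℝ)..T, f (Traj.pos t ω))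
      - (∑ i ∈ Finset.range n, (ω.2 i).toReal * f (ω.1 i))|
        ≤ (T - (Traj.jumpTime n ω).toReal) * ‖f‖ := by
  have hn : Traj.jumpTime n ω ≠ ∞ := (h1.trans_lt ENNReal.ofReal_lt_top).ne
  have hle : (Traj.jumpTime n ω).toReal ≤ T := ENNReal.toReal_le_of_le_ofReal hT h1
  have := intervalIntegral.norm_integral_le_of_norm_le_const (a := (Traj.jumpTime n ω).toReal)
    (b := T) (f := fun t => f (Traj.pos t ω)) (C := ‖f‖) (fun t _ => f.norm_coe_le_norm _)
  rw [← integral_pos f ω n hn, intervalIntegral.integral_interval_sub_left (pos_intble f ω _ _)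
    (pos_intble f ω _ _)]
  rw [Real.norm_eq_abs, abs_of_nonneg (by linarith : 0 ≤ T - (Traj.jumpTime n ω).toReal)] at this
  linarith

end Paths

section Law

lemma ext4 {α β γ δ : Type*} [MeasurableSpace α] [MeasurableSpace β] [MeasurableSpace γ]
    [MeasurableSpace δ] {n : ℕ} (m₁ m₂ : Measure ((α × (Fin n → β)) × (γ × δ)))
    [IsFiniteMeasure m₁]
    (h : ∀ (A : Set α) (B : Fin n → Set β) (C : Set γ) (D : Set δ), MeasurableSet A →
      (∀ i, MeasurableSet (B i)) → MeasurableSet C → MeasurableSet D →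
      m₁ ((A ×ˢ pi univ B) ×ˢ (C ×ˢ D)) = m₂ ((A ×ˢ pi univ B) ×ˢ (C ×ˢ D))) : m₁ = m₂ := by
  -- general A, general set in the pi space
  have h1 : ∀ (A : Set α) (B : Set (Fin n → β)) (C : Set γ) (D : Set δ), MeasurableSet A →
      MeasurableSet B → MeasurableSet C → MeasurableSet D →
      m₁ ((A ×ˢ B) ×ˢ (C ×ˢ D)) = m₂ ((A ×ˢ B) ×ˢ (C ×ˢ D)) := by
    intro A B C D hA hB hC hD
    have hf : Measurable (fun q : (α × (Fin n → β)) × (γ × δ) => q.1.2) := by fun_prop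
    have e : ∀ (m : Measure ((α × (Fin n → β)) × (γ × δ))) (B : Set (Fin n → β)),
        MeasurableSet B → (m.restrict ((A ×ˢ univ) ×ˢ (C ×ˢ D))).map (fun q => q.1.2) B
          = m ((A ×ˢ B) ×ˢ (C ×ˢ D)) := by
      intro m B hB
      rw [Measure.map_apply hf hB, Measure.restrict_apply (hf hB)]
      congr 1
      ext q
      simp
      tauto
    rw [← e m₁ B hB, ← e m₂ B hB]
    congr 1
    refine ext_of_generate_finite _ generateFrom_pi.symm isPiSystem_pi ?_ ?_
    · rintro _ ⟨B', hB', rfl⟩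
      have hB'' : ∀ i, MeasurableSet (B' i) := fun i => hB' i (mem_univ i)
      rw [e _ _ (MeasurableSet.univ_pi hB''), e _ _ (MeasurableSet.univ_pi hB'')]
      exact h A B' C D hA hB'' hC hD
    · rw [e _ _ MeasurableSet.univ, e _ _ MeasurableSet.univ]
      have := h A (fun _ => univ) C D hA (fun _ => MeasurableSet.univ) hC hD
      simpa using this
  have h2 : ∀ (A : Set (α × (Fin n → β))) (C : Set γ) (D : Set δ), MeasurableSet A →
      MeasurableSet C → MeasurableSet D →
      m₁ (A ×ˢ (C ×ˢ D)) = m₂ (A ×ˢ (C ×ˢ D)) := by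
    intro A C D hA hC hD
    have e : ∀ (m : Measure ((α × (Fin n → β)) × (γ × δ))) (B : Set (α × (Fin n → β))),
        MeasurableSet B → (m.restrict (univ ×ˢ (C ×ˢ D))).map (fun q => q.1) B
          = m (B ×ˢ (C ×ˢ D)) := by
      intro m B hB
      rw [Measure.map_apply measurable_fst hB, Measure.restrict_apply (measurable_fst hB)]
      congr 1
      ext q
      simp
    rw [← e m₁ A hA, ← e m₂ A hA]
    congr 1
    refine Measure.ext_prod fun {s t} hs ht => ?_
    rw [e _ _ (hs.prod ht), e _ _ (hs.prod ht)]
    exact h1 s t C D hs ht hC hD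
  refine Measure.ext_prod fun {A t} hA ht => ?_
  have e : ∀ (m : Measure ((α × (Fin n → β)) × (γ × δ))) (B : Set (γ × δ)),
      MeasurableSet B → (m.restrict (A ×ˢ univ)).map (fun q => q.2) B
        = m (A ×ˢ B) := by
    intro m B hB
    rw [Measure.map_apply measurable_snd hB, Measure.restrict_apply (measurable_snd hB)]
    congr 1
    ext q
    simp
    tauto
  rw [← e m₁ t ht, ← e m₂ t ht]
  congr 1
  refine Measure.ext_prod fun {s t} hs ht => ?_
  rw [e _ _ (hs.prod ht), e _ _ (hs.prod ht)]
  exact h2 A s t hA hs ht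

namespace ChainSetting
variable (S : ChainSetting E)

instance : IsProbabilityMeasure S.lam := S.lam_prob

lemma p_meas : Measurable (fun z : E × E => S.p z.1 z.2) := S.p_cont.measurable
lemma r_meas : Measurable S.r := S.r_cont.measurable

lemma lam_r_pos : ∀ᵐ x ∂S.lam, 0 < S.r x := by
  have h := ae_lt_top (by have := S.r_meas; fun_prop) S.inv_r_int
  filter_upwards [h] with x hx
  by_contra hr
  have : ENNReal.ofReal (S.r x) = 0 := by simpa using hr
  simp [this] at hx

lemma lintegral_exp {ρ : ℝ} (hρ : 0 < ρ) {g : ℝ≥0∞ → ℝ≥0∞} (hg : Measurable g) :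
    ∫⁻ s, g s ∂expMeasE ρ
      = ∫⁻ s in Ioi (0 : ℝ), ENNReal.ofReal (ρ * Real.exp (-(ρ * s))) * g (ENNReal.ofReal s) := by
  rw [expMeasE, if_pos hρ, lintegral_map hg ENNReal.measurable_ofReal,
    lintegral_withDensity_eq_lintegral_mul _ _ (by fun_prop)]
  · rw [← lintegral_indicator measurableSet_Ioi]
    refine lintegral_congr fun s => ?_
    by_cases hs : s ∈ Ioi (0 : ℝ) <;> simp [hs]
  · exact Measurable.indicator (by fun_prop) measurableSet_Ioi

lemma lintegral_exp_ite (ρ : ℝ) {g : ℝ≥0∞ → ℝ≥0∞} (hg : Measurable g) :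
    ∫⁻ s, g s ∂expMeasE ρ
      = if 0 < ρ then
        ∫⁻ s in Ioi (0 : ℝ), ENNReal.ofReal (ρ * Real.exp (-(ρ * s))) * g (ENNReal.ofReal s)
        else g ∞ := by
  split_ifs with h
  · exact lintegral_exp h hg
  · rw [expMeasE, if_neg h, lintegral_dirac' _ hg]

lemma measurable_exp_int {g : ℝ≥0∞ → ℝ≥0∞} (hg : Measurable g) :
    Measurable (fun x => ∫⁻ s, g s ∂expMeasE (S.r x)) := by
  have hr := S.r_meas
  simp_rw [lintegral_exp_ite _ hg]
  refine Measurable.ite (measurableSet_lt measurable_const hr) ?_ measurable_const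
  refine Measurable.lintegral_prod_right' (ν := volume.restrict (Ioi (0 : ℝ)))
    (f := fun q : E × ℝ => ENNReal.ofReal (S.r q.1 * Real.exp (-(S.r q.1 * q.2)))
      * g (ENNReal.ofReal q.2)) ?_
  fun_prop

lemma lintegral_skel (x : E) {g : E → ℝ≥0∞} (hg : Measurable g) :
    ∫⁻ y, g y ∂S.skel x = ∫⁻ y, ENNReal.ofReal (S.p x y) * g y ∂S.lam := by
  have hp := S.p_meas
  rw [skel, lintegral_withDensity_eq_lintegral_mul _ _ hg]
  · rfl
  · exact (hp.comp (measurable_const.prodMk measurable_id)).ennreal_ofReal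

lemma measurable_skel_int {g : E → ℝ≥0∞} (hg : Measurable g) :
    Measurable (fun x => ∫⁻ y, g y ∂S.skel x) := by
  have hp := S.p_meas
  simp_rw [S.lintegral_skel _ hg]
  refine Measurable.lintegral_prod_right' (ν := S.lam)
    (f := fun q : E × E => ENNReal.ofReal (S.p q.1 q.2) * g q.2) ?_
  exact hp.ennreal_ofReal.mul (hg.comp measurable_snd)

lemma p_lint (x : E) : ∫⁻ y, ENNReal.ofReal (S.p x y) ∂S.lam = 1 := by
  have hc : Continuous (S.p x) := S.p_cont.comp (Continuous.prodMk_right x)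
  rw [← ofReal_integral_eq_lintegral_ofReal, S.p_int, ENNReal.ofReal_one]
  · exact (BoundedContinuousFunction.mkOfCompact ⟨S.p x, hc⟩).integrable S.lam
  · exact Filter.Eventually.of_forall fun y => (S.p_pos x y).le

variable {S} {x : E} {P : Measure (Traj E)}

lemma r_pos_ae (hP : IsChainLaw S.r S.skel x P) (hx : 0 < S.r x) (n : ℕ) : ∀ᵐ ω ∂P, 0 < S.r (ω.1 n) := by
  have hms : MeasurableSet {y : E | ¬ 0 < S.r y} :=
    (measurableSet_lt measurable_const S.r_meas).compl
  cases n with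
  | zero =>
    have h := hP.init
    have hm : Measurable (fun ω : Traj E => ω.1 0) := by fun_prop
    have h2 : ∀ᵐ y ∂(P.map (fun ω => ω.1 0)), 0 < S.r y := by
      rw [h]
      rw [ae_dirac_iff (measurableSet_lt measurable_const S.r_meas)]
      exact hx
    exact ae_of_ae_map hm.aemeasurable h2
  | succ n =>
    have h := hP.markov n (fun _ => 1) ({y : E | ¬ 0 < S.r y}.indicator 1) measurable_const
      (measurable_one.indicator hms)
    have h0 : ∀ z, ∫⁻ y, ({y : E | ¬ 0 < S.r y}.indicator 1) y ∂S.skel z = 0 := by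
      intro z
      rw [lintegral_indicator_one hms]
      exact withDensity_absolutelyContinuous _ _ S.lam_r_pos
    simp only [h0, one_mul, lintegral_zero] at h
    have hm : Measurable (fun ω : Traj E => ω.1 (n + 1)) := by fun_prop
    have h3 : (fun ω : Traj E => ({y : E | ¬ 0 < S.r y}.indicator 1 (ω.1 (n + 1)) : ℝ≥0∞)) =ᵐ[P] 0 := by
      exact (lintegral_eq_zero_iff ((measurable_one.indicator hms).comp hm)).1 h
    filter_upwards [h3] with ω hω
    by_contra hc
    simp [indicator, hc] at hω

lemma prod_step (hP : IsChainLaw S.r S.skel x P) (n : ℕ) (f : (Fin (n + 1) → E) → ℝ≥0∞) (g : Fin n → ℝ≥0∞ → ℝ≥0∞)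
    (g' : ℝ≥0∞ → ℝ≥0∞) (k : E → ℝ≥0∞) (hf : Measurable f) (hg : ∀ i, Measurable (g i))
    (hg' : Measurable g') (hk : Measurable k) :
    ∫⁻ ω, f (fun i => ω.1 i) * (∏ i : Fin n, g i (ω.2 i)) * (g' (ω.2 n) * k (ω.1 (n + 1))) ∂P
     = ∫⁻ ω, f (fun i => ω.1 i) * (∏ i : Fin n, g i (ω.2 i)) *
        ((∫⁻ s, g' s ∂expMeasE (S.r (ω.1 n))) * ∫⁻ y, k y ∂S.skel (ω.1 n)) ∂P := by
  have hm1 : ∀ i, Measurable (fun x => ∫⁻ s, g i s ∂expMeasE (S.r x)) :=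
    fun i => S.measurable_exp_int (hg i)
  have hm2 := S.measurable_exp_int hg'
  have hm3 := S.measurable_skel_int hk
  have hf' : Measurable (fun z : ℕ → E => f (fun i => z i)) := hf.comp (by fun_prop)
  let G : Fin (n + 1) → ℝ≥0∞ → ℝ≥0∞ := Fin.snoc (α := fun _ => ℝ≥0∞ → ℝ≥0∞) g g'
  have hG : ∀ i, Measurable (G i) := by
    intro i
    refine Fin.lastCases ?_ (fun j => ?_) i
    · simpa [G] using hg'
    · simpa [G] using hg j
  have e1 := hP.holding (n + 1) (fun z => f (fun i => z i) * k (z (n + 1))) G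
    (by fun_prop) hG
  have e2 := hP.markov n (fun z => f z * (∏ i : Fin n, ∫⁻ s, g i s ∂expMeasE (S.r (z i.castSucc)))
    * ∫⁻ s, g' s ∂expMeasE (S.r (z (Fin.last n)))) k
    (by
      refine (hf.mul ?_).mul (hm2.comp (measurable_pi_apply _))
      refine Finset.measurable_prod _ fun i _ => (hm1 i).comp (measurable_pi_apply _)) hk
  have e3 := hP.holding n (fun z => f (fun i => z i) *
      ((∫⁻ s, g' s ∂expMeasE (S.r (z n))) * ∫⁻ y, k y ∂S.skel (z n))) g
    (by
      refine hf'.mul ((hm2.comp (measurable_pi_apply _)).mul (hm3.comp (measurable_pi_apply _))))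
    hg
  simp only [Fin.prod_univ_castSucc, G, Fin.snoc_castSucc, Fin.snoc_last, Fin.val_castSucc,
    Fin.val_last] at e1 e2
  calc _ = _ := by
        refine lintegral_congr fun ω => ?_
        ring
    _ = _ := e1
    _ = _ := by
        refine lintegral_congr fun ω => ?_
        ring
    _ = _ := e2
    _ = _ := by
        refine lintegral_congr fun ω => ?_
        ring
    _ = _ := e3.symm
    _ = _ := by
        refine lintegral_congr fun ω => ?_
        ring

end ChainSetting

end Law

section Step
namespace ChainSetting
variable {S : ChainSetting E} {x : E} {P : Measure (Traj E)}

/-- the one-step density -/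
def dens (S : ChainSetting E) (z : E) (s : ℝ) (y : E) : ℝ≥0∞ :=
  ENNReal.ofReal (S.r z * Real.exp (-(S.r z * s))) * ENNReal.ofReal (S.p z y)

lemma measurable_dens (S : ChainSetting E) :
    Measurable (fun q : E × ℝ × E => S.dens q.1 q.2.1 q.2.2) := by
  have hr := S.r_meas
  have hp := S.p_meas
  unfold dens
  have h1 : Measurable (fun q : E × ℝ × E =>
      ENNReal.ofReal (S.r q.1 * Real.exp (-(S.r q.1 * q.2.1)))) := by fun_prop
  refine h1.mul ?_
  exact (hp.comp (measurable_fst.prodMk measurable_snd.snd)).ennreal_ofReal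

lemma gen_step (hP : IsChainLaw S.r S.skel x P) (hx : 0 < S.r x) (n : ℕ)
    (G : ((Fin (n + 1) → E) × (Fin n → ℝ≥0∞)) × (ℝ × E) → ℝ≥0∞) (hG : Measurable G) :
    ∫⁻ ω, G ((fun i => ω.1 i, fun i => ω.2 i), ((ω.2 n).toReal, ω.1 (n + 1))) ∂P
      = ∫⁻ ω, (∫⁻ s in Ioi (0 : ℝ), ∫⁻ y, S.dens (ω.1 n) s y *
          G ((fun i => ω.1 i, fun i => ω.2 i), (s, y)) ∂S.lam) ∂P := by
  have := hP.prob
  have hr := S.r_meas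
  have hp := S.p_meas
  have hd := S.measurable_dens
  let Y : Traj E → (Fin (n + 1) → E) × (Fin n → ℝ≥0∞) := fun ω => (fun i => ω.1 i, fun i => ω.2 i)
  have hY : Measurable Y := by
    refine Measurable.prodMk ?_ ?_
    · exact measurable_pi_lambda _ fun i => (measurable_pi_apply _).comp measurable_fst
    · exact measurable_pi_lambda _ fun i => (measurable_pi_apply _).comp measurable_snd
  let R : Traj E → ℝ × E := fun ω => ((ω.2 n).toReal, ω.1 (n + 1))
  have hR : Measurable R := by
    refine Measurable.prodMk ?_ ?_
    · exact ((measurable_pi_apply _).comp measurable_snd).ennreal_toReal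
    · exact (measurable_pi_apply _).comp measurable_fst
  let d : ((Fin (n + 1) → E) × (Fin n → ℝ≥0∞)) × (ℝ × E) → ℝ≥0∞ :=
    fun q => S.dens (q.1.1 (Fin.last n)) q.2.1 q.2.2
  have hdm : Measurable d := by
    refine hd.comp (Measurable.prodMk ?_ measurable_snd)
    exact (measurable_pi_apply _).comp (measurable_fst.comp measurable_fst)
  let m₁ := P.map (fun ω => (Y ω, R ω))
  let m₂ := ((P.map Y).prod ((volume.restrict (Ioi (0 : ℝ))).prod S.lam)).withDensity d
  have hm₂ : ∀ G : ((Fin (n + 1) → E) × (Fin n → ℝ≥0∞)) × (ℝ × E) → ℝ≥0∞, Measurable G →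
      ∫⁻ q, G q ∂m₂ = ∫⁻ ω, (∫⁻ s in Ioi (0 : ℝ), ∫⁻ y, S.dens (ω.1 n) s y *
          G (Y ω, (s, y)) ∂S.lam) ∂P := by
    intro G hG
    have hdG : Measurable (fun q => d q * G q) := hdm.mul hG
    rw [lintegral_withDensity_eq_lintegral_mul _ hdm hG]
    simp only [Pi.mul_apply]
    rw [lintegral_prod _ hdG.aemeasurable, lintegral_map hdG.lintegral_prod_right' hY]
    refine lintegral_congr fun ω => ?_
    exact lintegral_prod _ (hdG.comp measurable_prodMk_left).aemeasurable
  have key : m₁ = m₂ := by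
    have : IsFiniteMeasure m₁ := by
      show IsFiniteMeasure (P.map _)
      infer_instance
    refine ext4 m₁ m₂ ?_
    intro A B C D hA hB hC hD
    have hBm : MeasurableSet (pi univ B) := MeasurableSet.univ_pi hB
    have hset : MeasurableSet ((A ×ˢ pi univ B) ×ˢ (C ×ˢ D)) := (hA.prod hBm).prod (hC.prod hD)
    have hps := prod_step hP n (A.indicator 1) (fun i => (B i).indicator 1)
      (fun s => C.indicator 1 s.toReal) (D.indicator 1) (measurable_one.indicator hA)
      (fun i => measurable_one.indicator (hB i))
      ((measurable_one.indicator hC).comp ENNReal.measurable_toReal) (measurable_one.indicator hD)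
    have hind : ∀ (a : Fin (n + 1) → E) (b : Fin n → ℝ≥0∞) (c : ℝ) (e : E),
        (((A ×ˢ pi univ B) ×ˢ (C ×ˢ D)).indicator 1 ((a, b), (c, e)) : ℝ≥0∞)
        = A.indicator 1 a * (∏ i : Fin n, (B i).indicator 1 (b i)) * (C.indicator 1 c * D.indicator 1 e) := by
      intro a b c e
      by_cases ha : a ∈ A
      · by_cases hb : b ∈ pi univ B
        · have : (∏ i : Fin n, (B i).indicator (1 : ℝ≥0∞ → ℝ≥0∞) (b i)) = 1 :=
            Finset.prod_eq_one fun i _ => by simp [hb i (mem_univ i)]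
          rw [this]
          by_cases hc : c ∈ C <;> by_cases he : e ∈ D <;> simp [ha, hb, hc, he, indicator, -Set.mem_pi]
        · have : ∃ i, b i ∉ B i := by
            by_contra hcon
            push Not at hcon
            exact hb fun i _ => hcon i
          obtain ⟨i, hi⟩ := this
          have : (∏ i : Fin n, (B i).indicator (1 : ℝ≥0∞ → ℝ≥0∞) (b i)) = 0 :=
            Finset.prod_eq_zero (Finset.mem_univ i) (by simp [hi])
          rw [this]
          simp [hb, indicator, -Set.mem_pi]
      · simp [ha, indicator]
    rw [← lintegral_indicator_one hset, ← lintegral_indicator_one hset,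
      hm₂ _ (measurable_one.indicator hset), lintegral_map (measurable_one.indicator hset)
        (hY.prodMk hR)]
    simp only [Y, R, hind]
    rw [hps]
    refine lintegral_congr_ae ?_
    filter_upwards [r_pos_ae hP hx n] with ω hω
    have hcc : Measurable (fun s : ℝ≥0∞ => (C.indicator 1 s.toReal : ℝ≥0∞)) :=
      (measurable_one.indicator hC).comp ENNReal.measurable_toReal
    rw [lintegral_exp hω hcc,
      S.lintegral_skel _ (measurable_one.indicator hD)]
    have hpm : Measurable (fun y => ENNReal.ofReal (S.p (ω.1 n) y) * (D.indicator 1 y : ℝ≥0∞)) :=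
      ((hp.comp (measurable_const.prodMk measurable_id)).ennreal_ofReal).mul
        (measurable_one.indicator hD)
    have hcm : Measurable (fun s : ℝ => (C.indicator 1 s : ℝ≥0∞)) := measurable_one.indicator hC
    rw [← lintegral_mul_const _ (by
      have := hcm.comp (ENNReal.measurable_toReal.comp ENNReal.measurable_ofReal)
      refine Measurable.mul (by fun_prop) this), ← lintegral_const_mul _ (by
      have := hcm.comp (ENNReal.measurable_toReal.comp ENNReal.measurable_ofReal)
      refine Measurable.mul (Measurable.mul (by fun_prop) this) measurable_const)]
    refine setLIntegral_congr_fun measurableSet_Ioi fun s hs => ?_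
    have hs0 : (0 : ℝ) ≤ s := le_of_lt hs
    simp only [ENNReal.toReal_ofReal hs0]
    rw [← lintegral_const_mul _ hpm, ← lintegral_const_mul _ (hpm.const_mul _)]
    refine lintegral_congr fun y => ?_
    simp only [dens]
    ring
  calc _ = ∫⁻ q, G q ∂m₁ := by rw [lintegral_map hG (hY.prodMk hR)]
    _ = ∫⁻ q, G q ∂m₂ := by rw [key]
    _ = _ := hm₂ G hG

lemma tau_ne_top_ae (hP : IsChainLaw S.r S.skel x P) (hx : 0 < S.r x) (n : ℕ) :
    ∀ᵐ ω ∂P, ω.2 n ≠ ∞ := by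
  have h := prod_step hP n (fun _ => 1) (fun _ _ => 1) (({∞} : Set ℝ≥0∞).indicator 1) (fun _ => 1)
    measurable_const (fun _ => measurable_const)
    (measurable_one.indicator (measurableSet_singleton _)) measurable_const
  have hz : ∫⁻ ω, (1 : ℝ≥0∞) * (∏ _i : Fin n, 1) * ((∫⁻ s, ({∞} : Set ℝ≥0∞).indicator 1 s ∂expMeasE (S.r (ω.1 n))) * ∫⁻ y, 1 ∂S.skel (ω.1 n)) ∂P = 0 := by
    rw [lintegral_congr_ae (g := fun _ => 0), lintegral_zero]
    filter_upwards [r_pos_ae hP hx n] with ω hω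
    rw [lintegral_exp hω (measurable_one.indicator (measurableSet_singleton _))]
    simp
  rw [hz] at h
  have hm : Measurable (fun ω : Traj E => (({∞} : Set ℝ≥0∞).indicator 1 (ω.2 n) : ℝ≥0∞)) :=
    (measurable_one.indicator (measurableSet_singleton _)).comp
      ((measurable_pi_apply n).comp measurable_snd)
  have h3 : (fun ω : Traj E => (({∞} : Set ℝ≥0∞).indicator 1 (ω.2 n) : ℝ≥0∞)) =ᵐ[P] 0 := by
    refine (lintegral_eq_zero_iff hm).1 ?_
    simpa using h
  filter_upwards [h3] with ω hω hc
  simp [indicator, hc] at hω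

end ChainSetting

/-- additive functional at the `n`-th jump -/
def Sn {E V : Type*} [NormedAddCommGroup V] [NormedSpace ℝ V] (F : E → V) (n : ℕ) (ω : Traj E) : V :=
  ∑ i ∈ Finset.range n, (ω.2 i).toReal • F (ω.1 i)

namespace ChainSetting
variable {S : ChainSetting E} {x : E} {P : Measure (Traj E)}
variable {V : Type*} [NormedAddCommGroup V] [NormedSpace ℝ V] [MeasurableSpace V] [BorelSpace V]
  [SecondCountableTopology V]

lemma measurable_Sn {F : E → V} (hF : Measurable F) (n : ℕ) :
    Measurable (fun ω : Traj E => Sn F n ω) := by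
  unfold Sn
  refine Finset.measurable_sum _ fun i _ => ?_
  exact (((measurable_pi_apply i).comp measurable_snd).ennreal_toReal).smul
    (hF.comp ((measurable_pi_apply i).comp measurable_fst))

lemma step (hP : IsChainLaw S.r S.skel x P) (hx : 0 < S.r x) (n : ℕ) {F : E → V}
    (hF : Measurable F) (H : (E × V) × (ℝ × E) → ℝ≥0∞) (hH : Measurable H) :
    ∫⁻ ω, H ((ω.1 n, Sn F n ω), ((ω.2 n).toReal, ω.1 (n + 1))) ∂P
      = ∫⁻ ω, (∫⁻ s in Ioi (0 : ℝ), ∫⁻ y, S.dens (ω.1 n) s y *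
          H ((ω.1 n, Sn F n ω), (s, y)) ∂S.lam) ∂P := by
  have h := gen_step hP hx n (fun q => H ((q.1.1 (Fin.last n),
    ∑ i : Fin n, (q.1.2 i).toReal • F (q.1.1 i.castSucc)), q.2)) (by
      refine hH.comp (Measurable.prodMk (Measurable.prodMk ?_ ?_) measurable_snd)
      · exact (measurable_pi_apply _).comp (measurable_fst.comp measurable_fst)
      · refine Finset.measurable_sum _ fun i _ => ?_
        exact (((measurable_pi_apply i).comp
          (measurable_snd.comp measurable_fst)).ennreal_toReal).smul
          (hF.comp ((measurable_pi_apply i.castSucc).comp (measurable_fst.comp measurable_fst))))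
  simp only [Fin.val_last, Fin.val_castSucc] at h
  simp only [Sn, Finset.sum_range]
  exact h

/-- one-step operator -/
def Dop (S : ChainSetting E) (F : E → V) (h : E × V → ℝ≥0∞) : E × V → ℝ≥0∞ := fun q =>
  ∫⁻ s in Ioi (0 : ℝ), ∫⁻ y, S.dens q.1 s y * h (y, q.2 + s • F q.1) ∂S.lam

lemma measurable_Dop {F : E → V} (hF : Measurable F) {h : E × V → ℝ≥0∞} (hh : Measurable h) :
    Measurable (S.Dop F h) := by
  unfold Dop
  have hd := S.measurable_dens
  have h1 : Measurable (fun q : ((E × V) × ℝ) × E => S.dens q.1.1.1 q.1.2 q.2 *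
      h (q.2, q.1.1.2 + q.1.2 • F q.1.1.1)) := by
    refine Measurable.mul ?_ ?_
    · exact hd.comp (measurable_fst.fst.fst.prodMk (measurable_fst.snd.prodMk measurable_snd))
    · refine hh.comp (measurable_snd.prodMk ?_)
      exact measurable_fst.fst.snd.add (measurable_fst.snd.smul (hF.comp measurable_fst.fst.fst))
  exact (h1.lintegral_prod_right').lintegral_prod_right' (ν := volume.restrict (Ioi (0 : ℝ)))

lemma step_Dop (hP : IsChainLaw S.r S.skel x P) (hx : 0 < S.r x) (n : ℕ) {F : E → V}
    (hF : Measurable F) {h : E × V → ℝ≥0∞} (hh : Measurable h) :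
    ∫⁻ ω, h (ω.1 (n + 1), Sn F (n + 1) ω) ∂P = ∫⁻ ω, S.Dop F h (ω.1 n, Sn F n ω) ∂P := by
  have := step hP hx n hF (fun q => h (q.2.2, q.1.2 + q.2.1 • F q.1.1)) (by
    refine hh.comp (measurable_snd.snd.prodMk ?_)
    exact measurable_fst.snd.add (measurable_snd.fst.smul (hF.comp measurable_fst.fst)))
  simpa only [Sn, Finset.sum_range_succ, Dop] using this

lemma law_zero (hP : IsChainLaw S.r S.skel x P) {h : E → ℝ≥0∞} (hh : Measurable h) :
    ∫⁻ ω, h (ω.1 0) ∂P = h x := by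
  have := lintegral_map (μ := P) hh (g := fun ω : Traj E => ω.1 0) (by fun_prop)
  rw [← this, hP.init, lintegral_dirac' _ hh]

lemma law_Dop (hP : IsChainLaw S.r S.skel x P) (hx : 0 < S.r x) (n : ℕ) {F : E → V}
    (hF : Measurable F) {h : E × V → ℝ≥0∞} (hh : Measurable h) :
    ∫⁻ ω, h (ω.1 n, Sn F n ω) ∂P = ((S.Dop F)^[n] h) (x, 0) := by
  induction n generalizing h with
  | zero =>
    simp only [Sn, Finset.range_zero, Finset.sum_empty, Function.iterate_zero, id]
    exact law_zero hP (h := fun y => h (y, 0)) (hh.comp (measurable_id.prodMk measurable_const))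
  | succ n ih =>
    rw [step_Dop hP hx n hF hh, ih (measurable_Dop hF hh), Function.iterate_succ_apply]

end ChainSetting
end Step

section Upper

lemma lint_exp_Ioi {k : ℝ} (hk : 0 < k) (a : ℝ) :
    ∫⁻ s in Ioi a, ENNReal.ofReal (k * Real.exp (-(k * s))) = ENNReal.ofReal (Real.exp (-(k * a))) := by
  have hi : IntegrableOn (fun s => k * Real.exp (-(k * s))) (Ioi a) := by
    have := (exp_neg_integrableOn_Ioi a hk).const_mul k
    simp only [neg_mul] at this
    exact this
  rw [← ofReal_integral_eq_lintegral_ofReal hi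
    (Filter.Eventually.of_forall fun s => by positivity)]
  congr 1
  have h := integral_exp_mul_Ioi (a := -k) (by linarith) a
  rw [integral_const_mul]
  simp only [neg_mul] at h
  rw [h]
  field_simp

lemma lint_exp_Ioc {k : ℝ} (hk : 0 < k) {a : ℝ} (ha : 0 ≤ a) :
    ∫⁻ s in Ioc 0 a, ENNReal.ofReal (k * Real.exp (-(k * s)))
      = ENNReal.ofReal (1 - Real.exp (-(k * a))) := by
  have hi : IntegrableOn (fun s => k * Real.exp (-(k * s))) (Ioc 0 a) := by
    have := (exp_neg_integrableOn_Ioi 0 hk).const_mul k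
    simp only [neg_mul] at this
    exact IntegrableOn.mono_set this Ioc_subset_Ioi_self
  rw [← ofReal_integral_eq_lintegral_ofReal hi
    (Filter.Eventually.of_forall fun s => by positivity)]
  congr 1
  rw [← intervalIntegral.integral_of_le ha]
  rw [intervalIntegral.integral_eq_sub_of_hasDerivAt (f := fun s => -Real.exp (-(k * s)))]
  · simp; ring
  · intro s _
    have h1 : HasDerivAt (fun s : ℝ => -(k * s)) (-k) s := by
      exact (((hasDerivAt_id s).const_mul k).neg).congr_deriv (by ring)
    exact (h1.exp.neg).congr_deriv (by ring)
  · exact Continuous.intervalIntegrable (by fun_prop) _ _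

namespace ChainSetting
variable (S : ChainSetting E)

/-- skeleton operator -/
def Pop (h : E → ℝ) (x : E) : ℝ := ∫ y, S.p x y * h y ∂S.lam

lemma Pop_cont {h : E → ℝ} (hh : Continuous h) : Continuous (S.Pop h) := by
  unfold Pop
  obtain ⟨C, hC⟩ := (isCompact_range (S.p_cont.mul (hh.comp continuous_snd))).isBounded.exists_norm_le
  refine continuous_of_dominated (bound := fun _ => C) ?_ ?_ (integrable_const _) ?_
  · intro x
    exact ((S.p_cont.comp (Continuous.prodMk_right x)).mul hh).aestronglyMeasurable
  · intro x
    exact Filter.Eventually.of_forall fun y => hC _ ⟨(x, y), rfl⟩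
  · refine Filter.Eventually.of_forall fun y => ?_
    exact (S.p_cont.comp (Continuous.prodMk_left y)).mul continuous_const

lemma int_of_cont (m : Measure E) [IsFiniteMeasure m] {h : E → ℝ} (hh : Continuous h) :
    Integrable h m :=
  (BoundedContinuousFunction.mkOfCompact ⟨h, hh⟩).integrable m

lemma p_cont_right (x : E) : Continuous (S.p x) := S.p_cont.comp (Continuous.prodMk_right x)

lemma Pop_lint (x : E) {h : E → ℝ} (hh : Continuous h) (h0 : ∀ y, 0 ≤ h y) :
    ∫⁻ y, ENNReal.ofReal (S.p x y) * ENNReal.ofReal (h y) ∂S.lam = ENNReal.ofReal (S.Pop h x) := by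
  unfold Pop
  rw [ofReal_integral_eq_lintegral_ofReal]
  · refine lintegral_congr fun y => ?_
    rw [ENNReal.ofReal_mul (S.p_pos x y).le]
  · exact int_of_cont _ ((S.p_cont_right x).mul hh)
  · exact Filter.Eventually.of_forall fun y => mul_nonneg (S.p_pos x y).le (h0 y)

lemma Pop_pos (x : E) {h : E → ℝ} (hh : Continuous h) (h0 : ∀ y, 0 < h y) : 0 < S.Pop h x := by
  unfold Pop
  rw [integral_pos_iff_support_of_nonneg]
  · have : Function.support (fun y => S.p x y * h y) = univ := by
      ext y
      simp [(S.p_pos x y).ne', (h0 y).ne']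
    rw [this]; simp
  · intro y; exact mul_nonneg (S.p_pos x y).le (h0 y).le
  · exact int_of_cont _ ((S.p_cont_right x).mul hh)

/-- `g_φ = - e^{-φ} L e^φ` -/
def gphi (φ : C(E, ℝ)) : C(E, ℝ) where
  toFun x := S.r x - S.r x * S.Pop (fun y => Real.exp (φ y)) x * Real.exp (- φ x)
  continuous_toFun := by
    have := S.Pop_cont (h := fun y => Real.exp (φ y)) (by fun_prop)
    have := S.r_cont
    fun_prop

lemma Ihat_integral (μ : Measure E) [IsProbabilityMeasure μ] (φ : C(E, ℝ)) :
    -∫ z : E × E, (Real.exp (φ z.2 - φ z.1) - 1) ∂S.muc μ = ∫ x, S.gphi φ x ∂μ := by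
  have hr := S.r_cont
  have hp := S.p_cont
  have hd : Continuous (fun z : E × E => S.r z.1 * S.p z.1 z.2) := by fun_prop
  rw [muc, integral_withDensity_eq_integral_toReal_smul hd.measurable.ennreal_ofReal
    (Filter.Eventually.of_forall fun z => ENNReal.ofReal_lt_top)]
  have hnn : ∀ z : E × E, 0 ≤ S.r z.1 * S.p z.1 z.2 :=
    fun z => mul_nonneg (S.r_nonneg _) (S.p_pos _ _).le
  simp only [ENNReal.toReal_ofReal (hnn _), smul_eq_mul]
  rw [integral_prod]
  · rw [← integral_neg]
    refine integral_congr_ae (Filter.Eventually.of_forall fun x => ?_)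
    simp only [gphi, ContinuousMap.coe_mk, Pop]
    have e : ∀ y, S.r x * S.p x y * (Real.exp (φ y - φ x) - 1)
        = (S.r x * Real.exp (- φ x)) * (S.p x y * Real.exp (φ y)) - S.r x * S.p x y := by
      intro y
      rw [sub_eq_add_neg (φ y), Real.exp_add]; ring
    simp only [e]
    have hpx := S.p_cont_right x
    rw [integral_sub, integral_const_mul, integral_const_mul, S.p_int]
    · ring
    · exact int_of_cont _ (by fun_prop)
    · exact int_of_cont _ (by fun_prop)
  · have hc : Continuous (fun z : E × E => S.r z.1 * S.p z.1 z.2 * (Real.exp (φ z.2 - φ z.1) - 1)) := by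
      fun_prop
    exact (BoundedContinuousFunction.mkOfCompact ⟨_, hc⟩).integrable _

lemma Ihat_eq (μ : Measure E) [IsProbabilityMeasure μ] :
    S.Ihat0 μ = ⨆ φ : C(E, ℝ), ENNReal.ofReal (∫ x, S.gphi φ x ∂μ) := by
  unfold Ihat0
  simp only [S.Ihat_integral]

lemma exists_r_bound : ∃ R : ℝ, 0 < R ∧ ∀ x, S.r x ≤ R := by
  obtain ⟨C, hC⟩ := (isCompact_range S.r_cont).isBounded.exists_norm_le
  refine ⟨max C 1, by positivity, fun x => ?_⟩
  exact (le_abs_self _).trans ((hC _ ⟨x, rfl⟩).trans (le_max_left _ _))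

variable {S} {x : E} {P : Measure (Traj E)}

lemma nonexpl (hP : IsChainLaw S.r S.skel x P) (hx : 0 < S.r x) (T : ℝ) :
    ∀ᵐ ω ∂P, ∃ n, T < Sn (fun _ : E => (1 : ℝ)) n ω := by
  obtain ⟨R, hR, hrR⟩ := S.exists_r_bound
  let F : E → ℝ := fun _ => 1
  have hF : Measurable F := measurable_const
  let h : E × ℝ → ℝ≥0∞ := fun q => ENNReal.ofReal (Real.exp (-q.2))
  have hh : Measurable h := by fun_prop
  let q : ℝ≥0∞ := ENNReal.ofReal (R / (R + 1))
  have hq : q < 1 := by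
    rw [← ENNReal.ofReal_one]
    refine (ENNReal.ofReal_lt_ofReal_iff one_pos).2 ?_
    rw [div_lt_one (by positivity)]; linarith
  have hD : ∀ z, S.Dop F h z ≤ q * h z := by
    rintro ⟨z, v⟩
    simp only [Dop, h, F, smul_eq_mul, mul_one, dens]
    have hpl := S.p_lint z
    have hpm : Measurable (fun y => ENNReal.ofReal (S.p z y)) :=
      (S.p_cont_right z).measurable.ennreal_ofReal
    have e : ∀ s : ℝ, ∫⁻ y, ENNReal.ofReal (S.r z * Real.exp (-(S.r z * s))) * ENNReal.ofReal (S.p z y) *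
        ENNReal.ofReal (Real.exp (-(v + s))) ∂S.lam =
        ENNReal.ofReal (S.r z / (S.r z + 1) * Real.exp (-v)) *
          ENNReal.ofReal ((S.r z + 1) * Real.exp (-((S.r z + 1) * s))) := by
      intro s
      rw [lintegral_mul_const _ (hpm.const_mul _), lintegral_const_mul _ hpm, hpl, mul_one]
      have := S.r_nonneg z
      rw [← ENNReal.ofReal_mul (by positivity), ← ENNReal.ofReal_mul (by positivity)]
      congr 1
      rw [show -(v + s) = -v + -s by ring, show -((S.r z + 1) * s) = -(S.r z * s) + -s by ring,
        Real.exp_add, Real.exp_add]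
      field_simp
    simp only [e]
    have := S.r_nonneg z
    rw [lintegral_const_mul _ (by fun_prop), lint_exp_Ioi (by linarith)]
    simp only [mul_zero, neg_zero, Real.exp_zero, ENNReal.ofReal_one, mul_one]
    rw [ENNReal.ofReal_mul (by positivity)]
    gcongr
    refine ENNReal.ofReal_le_ofReal ?_
    rw [div_le_div_iff₀ (by linarith) (by linarith)]
    nlinarith [hrR z]
  have hb : ∀ n, ∫⁻ ω, h (ω.1 n, Sn F n ω) ∂P ≤ q ^ n := by
    intro n
    induction n with
    | zero =>
      have := hP.prob
      simp [h, Sn]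
    | succ n ih =>
      rw [step_Dop hP hx n hF hh]
      calc _ ≤ ∫⁻ ω, q * h (ω.1 n, Sn F n ω) ∂P := lintegral_mono fun ω => hD _
        _ = q * ∫⁻ ω, h (ω.1 n, Sn F n ω) ∂P := lintegral_const_mul _
            (hh.comp (((measurable_pi_apply n).comp measurable_fst).prodMk (measurable_Sn hF n)))
        _ ≤ q * q ^ n := by gcongr
        _ = q ^ (n + 1) := by ring
  have hm : ∀ n, Measurable (fun ω : Traj E => h (ω.1 n, Sn F n ω)) := fun n =>
    (hh.comp (((measurable_pi_apply n).comp measurable_fst).prodMk (measurable_Sn hF n)))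
  rw [ae_iff]
  have hbd : ∀ n, P {ω | ¬∃ n, T < Sn F n ω} ≤ (ENNReal.ofReal (Real.exp (-T)))⁻¹ * q ^ n := by
    intro n
    have hsub : {ω : Traj E | ¬∃ n, T < Sn F n ω} ⊆
        {ω | ENNReal.ofReal (Real.exp (-T)) ≤ h (ω.1 n, Sn F n ω)} := by
      intro ω hω
      have : Sn F n ω ≤ T := by
        by_contra hc
        exact hω ⟨n, not_le.1 hc⟩
      refine ENNReal.ofReal_le_ofReal ?_
      simpa using this
    refine (measure_mono hsub).trans ?_
    refine (meas_ge_le_lintegral_div (hm n).aemeasurable ?_ ENNReal.ofReal_ne_top).trans ?_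
    · simp [Real.exp_pos]
    · rw [ENNReal.div_eq_inv_mul]
      gcongr
      exact hb n
  have hlim : Tendsto (fun n : ℕ => (ENNReal.ofReal (Real.exp (-T)))⁻¹ * q ^ n) atTop (𝓝 0) := by
    have := ENNReal.Tendsto.const_mul (ENNReal.tendsto_pow_atTop_nhds_zero_of_lt_one hq)
      (a := (ENNReal.ofReal (Real.exp (-T)))⁻¹) (Or.inr (by simp [Real.exp_pos]))
    simpa using this
  exact le_antisymm (ge_of_tendsto' hlim hbd) bot_le

end ChainSetting
end Upper

section Upper2

lemma Sn_succ {E V : Type*} [NormedAddCommGroup V] [NormedSpace ℝ V] (F : E → V) (n : ℕ) (ω : Traj E) :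
    Sn F (n + 1) ω = Sn F n ω + (ω.2 n).toReal • F (ω.1 n) := by
  simp [Sn, Finset.sum_range_succ]

lemma Sn_zero {E V : Type*} [NormedAddCommGroup V] [NormedSpace ℝ V] (F : E → V) (ω : Traj E) :
    Sn F 0 ω = 0 := by simp [Sn]

lemma Sn_map {E V W : Type*} [NormedAddCommGroup V] [NormedSpace ℝ V] [NormedAddCommGroup W]
    [NormedSpace ℝ W] (L : V →L[ℝ] W) (F : E → V) (n : ℕ) (ω : Traj E) :
    L (Sn F n ω) = Sn (fun x => L (F x)) n ω := by
  simp [Sn]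

lemma jumpTime_eq {E : Type*} (ω : Traj E) (hω : ∀ i, ω.2 i ≠ ∞) (n : ℕ) :
    Traj.jumpTime n ω = ENNReal.ofReal (Sn (fun _ : E => (1 : ℝ)) n ω) := by
  unfold Traj.jumpTime Sn
  rw [ENNReal.ofReal_sum_of_nonneg (fun i _ => by simp)]
  refine Finset.sum_congr rfl fun i _ => ?_
  simp [ENNReal.ofReal_toReal (hω i)]

lemma Sn_one_nonneg {E : Type*} (ω : Traj E) (n : ℕ) : 0 ≤ Sn (fun _ : E => (1 : ℝ)) n ω := by
  unfold Sn
  exact Finset.sum_nonneg fun i _ => by simp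

namespace ChainSetting
variable (S : ChainSetting E)

/-- first weight -/
def Wt (φ : C(E, ℝ)) (T : ℝ) (q : E × (ℝ × ℝ)) : ℝ≥0∞ :=
  {t : ℝ | t ≤ T}.indicator (fun _ => ENNReal.ofReal (Real.exp (q.2.2 + φ q.1))) q.2.1

/-- second weight -/
def Ut (φ : C(E, ℝ)) (T : ℝ) (q : (E × (ℝ × ℝ)) × (ℝ × E)) : ℝ≥0∞ :=
  {t : ℝ | t ≤ T}.indicator (fun _ => {t : ℝ | T < t}.indicator (fun _ =>
    ENNReal.ofReal (Real.exp (q.1.2.2 + (T - q.1.2.1) * S.gphi φ q.1.1 + φ q.1.1)))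
      (q.1.2.1 + q.2.1)) q.1.2.1

lemma measurable_Wt (φ : C(E, ℝ)) (T : ℝ) : Measurable (Wt φ T : E × (ℝ × ℝ) → ℝ≥0∞) := by
  have hφ := φ.continuous.measurable
  have : (Wt φ T : E × (ℝ × ℝ) → ℝ≥0∞) = {q | q.2.1 ≤ T}.indicator
      (fun q => ENNReal.ofReal (Real.exp (q.2.2 + φ q.1))) := by
    ext q; simp [Wt, indicator]
  rw [this]
  exact Measurable.indicator (by fun_prop) (measurableSet_le (by fun_prop) (by fun_prop))

lemma measurable_Ut (φ : C(E, ℝ)) (T : ℝ) : Measurable (S.Ut φ T) := by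
  have hφ := φ.continuous.measurable
  have hg := (S.gphi φ).continuous.measurable
  have : S.Ut φ T = {q | q.1.2.1 ≤ T}.indicator ({q | T < q.1.2.1 + q.2.1}.indicator
      (fun q => ENNReal.ofReal (Real.exp (q.1.2.2 + (T - q.1.2.1) * S.gphi φ q.1.1 + φ q.1.1)))) := by
    ext q; simp [Ut, indicator]
  rw [this]
  exact Measurable.indicator (Measurable.indicator (by fun_prop)
    (measurableSet_lt (by fun_prop) (by fun_prop))) (measurableSet_le (by fun_prop) (by fun_prop))

lemma UW_inner (φ : C(E, ℝ)) (T : ℝ) (z : E) (v : ℝ × ℝ) :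
    ∫⁻ s in Ioi (0 : ℝ), ∫⁻ y, S.dens z s y *
      (Wt φ T (y, v + s • (1, S.gphi φ z)) + S.Ut φ T ((z, v), (s, y))) ∂S.lam ≤ Wt φ T (z, v) := by
  rcases (S.r_nonneg z).eq_or_lt with hr | hr
  · simp [dens, ← hr]
  by_cases hv : T < v.1
  · have : ∀ s ∈ Ioi (0 : ℝ), ∫⁻ y, S.dens z s y *
      (Wt φ T (y, v + s • (1, S.gphi φ z)) + S.Ut φ T ((z, v), (s, y))) ∂S.lam = 0 := by
      intro s hs
      have hs : 0 < s := hs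
      have h1 : ¬ (v.1 + s ≤ T) := by linarith
      have h2 : ¬ (v.1 ≤ T) := by linarith
      simp [Wt, Ut, h1, h2]
    rw [setLIntegral_congr_fun measurableSet_Ioi this]
    simp
  push Not at hv
  have hexp : Continuous (fun y => Real.exp (φ y)) := by fun_prop
  set a := T - v.1 with ha
  have ha0 : 0 ≤ a := by linarith
  set q := S.Pop (fun y => Real.exp (φ y)) z with hq
  have hq0 : 0 < q := S.Pop_pos z hexp fun y => Real.exp_pos _
  set k := S.r z * q * Real.exp (- φ z) with hk
  have hk0 : 0 < k := by positivity
  have hg : S.gphi φ z = S.r z - k := rfl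
  have hpm : Measurable (fun y => ENNReal.ofReal (S.p z y)) :=
      (S.p_cont_right z).measurable.ennreal_ofReal
  have hem : Measurable (fun y => ENNReal.ofReal (Real.exp (φ y))) :=
      hexp.measurable.ennreal_ofReal
  have e1 : ∀ s ∈ Ioc 0 a, ∫⁻ y, S.dens z s y *
      (Wt φ T (y, v + s • (1, S.gphi φ z)) + S.Ut φ T ((z, v), (s, y))) ∂S.lam
      = ENNReal.ofReal (Real.exp (v.2 + φ z)) * ENNReal.ofReal (k * Real.exp (-(k * s))) := by
    intro s hs
    have h1 : v.1 + s ≤ T := by linarith [hs.2]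
    have h2 : ¬ (T < v.1 + s) := by linarith
    have : ∀ y, S.dens z s y *
      (Wt φ T (y, v + s • (1, S.gphi φ z)) + S.Ut φ T ((z, v), (s, y))) =
      ENNReal.ofReal (S.r z * Real.exp (-(S.r z * s)) * Real.exp (v.2 + s * S.gphi φ z)) *
        (ENNReal.ofReal (S.p z y) * ENNReal.ofReal (Real.exp (φ y))) := by
      intro y
      have hp := S.p_pos z y
      simp [Wt, Ut, h1, h2, dens]
      rw [← ENNReal.ofReal_mul (by positivity), ← ENNReal.ofReal_mul (by positivity),
        ← ENNReal.ofReal_mul (by positivity), ← ENNReal.ofReal_mul (by positivity)]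
      rw [Real.exp_add (v.2 + _)]
      congr 1; ring
    simp only [this]
    have hpe : Measurable (fun y => ENNReal.ofReal (S.p z y) * ENNReal.ofReal (Real.exp (φ y))) :=
      hpm.mul hem
    rw [lintegral_const_mul _ hpe, S.Pop_lint z hexp (fun y => (Real.exp_pos _).le),
      ← hq, ← ENNReal.ofReal_mul (by positivity), ← ENNReal.ofReal_mul (by positivity)]
    congr 1
    rw [hg]
    rw [hk]
    have : Real.exp (v.2 + φ z) = Real.exp v.2 * Real.exp (φ z) := Real.exp_add _ _
    rw [this, ← hk]
    have e3 : Real.exp (-(S.r z * s)) * Real.exp (v.2 + s * (S.r z - k)) =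
        Real.exp v.2 * Real.exp (-(k * s)) := by
      rw [← Real.exp_add, ← Real.exp_add]; congr 1; ring
    have e4 : Real.exp (φ z) * Real.exp (- φ z) = 1 := by
      rw [← Real.exp_add]; simp
    calc _ = S.r z * q * (Real.exp (-(S.r z * s)) * Real.exp (v.2 + s * (S.r z - k))) := by ring
      _ = S.r z * q * (Real.exp v.2 * Real.exp (-(k * s))) * (Real.exp (φ z) * Real.exp (- φ z)) := by
        rw [e3, e4, mul_one]
      _ = _ := by ring
  have e2 : ∀ s ∈ Ioi a, ∫⁻ y, S.dens z s y *
      (Wt φ T (y, v + s • (1, S.gphi φ z)) + S.Ut φ T ((z, v), (s, y))) ∂S.lam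
      = ENNReal.ofReal (Real.exp (v.2 + a * S.gphi φ z + φ z)) *
        ENNReal.ofReal (S.r z * Real.exp (-(S.r z * s))) := by
    intro s hs
    have hs : a < s := hs
    have h1 : ¬ (v.1 + s ≤ T) := by linarith
    have h2 : (T < v.1 + s) := by linarith
    have : ∀ y, S.dens z s y *
      (Wt φ T (y, v + s • (1, S.gphi φ z)) + S.Ut φ T ((z, v), (s, y))) =
      ENNReal.ofReal (Real.exp (v.2 + a * S.gphi φ z + φ z)) *
        ENNReal.ofReal (S.r z * Real.exp (-(S.r z * s))) * ENNReal.ofReal (S.p z y) := by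
      intro y
      simp [Wt, Ut, h1, h2, dens, hv, ← ha]
      ring
    simp only [this]
    rw [lintegral_const_mul _ hpm, S.p_lint, mul_one]
  rw [← Ioc_union_Ioi_eq_Ioi ha0, lintegral_union measurableSet_Ioi Ioc_disjoint_Ioi_same,
    setLIntegral_congr_fun measurableSet_Ioc e1, setLIntegral_congr_fun measurableSet_Ioi e2,
    lintegral_const_mul _ (by fun_prop), lintegral_const_mul _ (by fun_prop),
    lint_exp_Ioc hk0 ha0, lint_exp_Ioi hr]
  have h1 : Real.exp (-(k * a)) ≤ 1 := by
    rw [Real.exp_le_one_iff]; nlinarith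
  rw [← ENNReal.ofReal_mul (by positivity), ← ENNReal.ofReal_mul (by positivity),
    ← ENNReal.ofReal_add (mul_nonneg (by positivity) (by linarith)) (by positivity)]
  simp only [Wt, mem_ofPred_eq, hv, indicator_of_mem]
  refine ENNReal.ofReal_le_ofReal (le_of_eq ?_)
  rw [← Real.exp_add, mul_sub, ← Real.exp_add, hg]
  rw [show v.2 + a * (S.r z - k) + φ z + -(S.r z * a) = v.2 + φ z + -(k * a) by ring]
  ring

variable {S} {x : E} {P : Measure (Traj E)}

lemma UW_step (hP : IsChainLaw S.r S.skel x P) (hx : 0 < S.r x) (φ : C(E, ℝ)) (T : ℝ) (n : ℕ) :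
    ∫⁻ ω, Wt φ T (ω.1 (n + 1), Sn (fun y => ((1 : ℝ), S.gphi φ y)) (n + 1) ω) ∂P +
    ∫⁻ ω, S.Ut φ T ((ω.1 n, Sn (fun y => ((1 : ℝ), S.gphi φ y)) n ω),
      ((ω.2 n).toReal, ω.1 (n + 1))) ∂P ≤
    ∫⁻ ω, Wt φ T (ω.1 n, Sn (fun y => ((1 : ℝ), S.gphi φ y)) n ω) ∂P := by
  have hg := (S.gphi φ).continuous.measurable
  have hF : Measurable (fun y => ((1 : ℝ), S.gphi φ y)) := by fun_prop
  have hW := measurable_Wt (E := E) φ T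
  have hU := S.measurable_Ut φ T
  have hUc : Measurable (fun ω : Traj E => S.Ut φ T ((ω.1 n, Sn (fun y => ((1 : ℝ), S.gphi φ y)) n ω),
      ((ω.2 n).toReal, ω.1 (n + 1)))) := hU.comp (by
    have := measurable_Sn hF n
    fun_prop)
  rw [← lintegral_add_right _ hUc]
  simp only [Sn_succ]
  have hH : Measurable (fun q : (E × (ℝ × ℝ)) × (ℝ × E) =>
      Wt φ T (q.2.2, q.1.2 + q.2.1 • ((1 : ℝ), S.gphi φ q.1.1)) + S.Ut φ T q) := by
    refine Measurable.add (hW.comp ?_) hU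
    fun_prop
  rw [step hP hx n hF _ hH]
  exact lintegral_mono fun ω => S.UW_inner φ T _ _

lemma U_sum (hP : IsChainLaw S.r S.skel x P) (hx : 0 < S.r x) (φ : C(E, ℝ)) (T : ℝ) :
    ∑' n, ∫⁻ ω, S.Ut φ T ((ω.1 n, Sn (fun y => ((1 : ℝ), S.gphi φ y)) n ω),
      ((ω.2 n).toReal, ω.1 (n + 1))) ∂P ≤ ENNReal.ofReal (Real.exp (φ x)) := by
  have h0 : ∫⁻ ω, Wt φ T (ω.1 0, Sn (fun y => ((1 : ℝ), S.gphi φ y)) 0 ω) ∂P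
      ≤ ENNReal.ofReal (Real.exp (φ x)) := by
    have hm : Measurable (fun y => ENNReal.ofReal (Real.exp (φ y))) :=
      (Continuous.measurable (by fun_prop)).ennreal_ofReal
    rw [← law_zero hP (h := fun y => ENNReal.ofReal (Real.exp (φ y))) hm]
    refine lintegral_mono fun ω => ?_
    simp only [Wt, Sn_zero]
    refine (indicator_le_self' (fun _ _ => bot_le) _).trans ?_
    simp
  rw [ENNReal.tsum_eq_iSup_nat]
  refine iSup_le fun N => ?_
  refine le_trans ?_ h0
  have : ∀ N, ∑ n ∈ Finset.range N, ∫⁻ ω, S.Ut φ T ((ω.1 n, Sn (fun y => ((1 : ℝ), S.gphi φ y)) n ω),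
      ((ω.2 n).toReal, ω.1 (n + 1))) ∂P +
      ∫⁻ ω, Wt φ T (ω.1 N, Sn (fun y => ((1 : ℝ), S.gphi φ y)) N ω) ∂P ≤
      ∫⁻ ω, Wt φ T (ω.1 0, Sn (fun y => ((1 : ℝ), S.gphi φ y)) 0 ω) ∂P := by
    intro N
    induction N with
    | zero => simp
    | succ N ih =>
      rw [Finset.sum_range_succ, add_assoc]
      refine le_trans ?_ ih
      gcongr
      rw [add_comm]
      exact UW_step hP hx φ T N
  exact le_self_add.trans (this N)

lemma upper_basic (hP : IsChainLaw S.r S.skel x P) (hx : 0 < S.r x) (φ : C(E, ℝ)) {T : ℝ} (hT : 0 < T)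
    (a : ℝ) : P {ω | a < ∫ y, S.gphi φ y ∂(toPM (empMeas T ω) : Measure E)} ≤
      ENNReal.ofReal (Real.exp (2 * ‖φ‖ - a * T)) := by
  have hg := (S.gphi φ).continuous.measurable
  have hF : Measurable (fun y => ((1 : ℝ), S.gphi φ y)) := by fun_prop
  set U : ℕ → Traj E → ℝ≥0∞ := fun n ω =>
    S.Ut φ T ((ω.1 n, Sn (fun y => ((1 : ℝ), S.gphi φ y)) n ω), ((ω.2 n).toReal, ω.1 (n + 1))) with hU
  have hUm : ∀ n, Measurable (U n) := fun n => (S.measurable_Ut φ T).comp (by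
    have := measurable_Sn hF n
    fun_prop)
  have hsum : ∫⁻ ω, ∑' n, U n ω ∂P ≤ ENNReal.ofReal (Real.exp (φ x)) := by
    rw [lintegral_tsum fun n => (hUm n).aemeasurable]
    exact U_sum hP hx φ T
  set b := ENNReal.ofReal (Real.exp (a * T - ‖φ‖)) with hb
  have hsub : P {ω | a < ∫ y, S.gphi φ y ∂(toPM (empMeas T ω) : Measure E)} ≤
      P {ω | b ≤ ∑' n, U n ω} := by
    refine measure_mono_ae ?_
    filter_upwards [nonexpl hP hx T, ae_all_iff.2 (fun n => tau_ne_top_ae hP hx n)] with ω h1 h2 h3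
    have h3 : a < ∫ y, S.gphi φ y ∂(toPM (empMeas T ω) : Measure E) := h3
    classical
    obtain ⟨n, hn1, hn2⟩ : ∃ n, Sn (fun _ : E => (1 : ℝ)) n ω ≤ T ∧
        T < Sn (fun _ : E => (1 : ℝ)) (n + 1) ω := by
      have hpos : Nat.find h1 ≠ 0 := by
        intro h0
        have := Nat.find_spec h1
        rw [h0, Sn_zero] at this
        linarith
      obtain ⟨m, hm⟩ := Nat.exists_eq_succ_of_ne_zero hpos
      refine ⟨m, not_lt.1 (Nat.find_min h1 (by omega)), ?_⟩
      have := Nat.find_spec h1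
      rwa [hm] at this
    refine le_trans ?_ (ENNReal.le_tsum n)
    rw [integral_toPM hT, integral_pos' (S.gphi φ) ω n T hT.le
      (by rw [jumpTime_eq ω h2]; exact ENNReal.ofReal_le_ofReal hn1)
      (by rw [jumpTime_eq ω h2]; exact (ENNReal.ofReal_lt_ofReal_iff (hT.trans hn2)).2 hn2),
      jumpTime_eq ω h2, ENNReal.toReal_ofReal (Sn_one_nonneg ω n)] at h3
    have e1 : (Sn (fun y => ((1 : ℝ), S.gphi φ y)) n ω).1 = Sn (fun _ : E => (1 : ℝ)) n ω :=
      Sn_map (ContinuousLinearMap.fst ℝ ℝ ℝ) _ n ω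
    have e2 : (Sn (fun y => ((1 : ℝ), S.gphi φ y)) n ω).2 =
      ∑ i ∈ Finset.range n, (ω.2 i).toReal * S.gphi φ (ω.1 i) :=
      Sn_map (ContinuousLinearMap.snd ℝ ℝ ℝ) _ n ω
    have hn2' : T < Sn (fun _ : E => (1 : ℝ)) n ω + (ω.2 n).toReal := by
      rw [Sn_succ] at hn2; simpa using hn2
    simp only [hU, Ut, e1, e2]
    rw [indicator_of_mem (show _ ∈ {t : ℝ | t ≤ T} from hn1),
      indicator_of_mem (show _ ∈ {t : ℝ | T < t} from hn2')]
    refine ENNReal.ofReal_le_ofReal (Real.exp_le_exp.2 ?_)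
    have hφ : -‖φ‖ ≤ φ (ω.1 n) := (abs_le.1 (φ.norm_coe_le_norm (ω.1 n))).1
    rw [lt_inv_mul_iff₀ hT] at h3
    linarith
  refine hsub.trans ((meas_ge_le_lintegral_div (Measurable.tsum hUm).aemeasurable ?_
    ENNReal.ofReal_ne_top).trans ?_)
  · simp [Real.exp_pos]
  · refine (ENNReal.div_le_div_right hsum _).trans ?_
    rw [← ENNReal.ofReal_div_of_pos (Real.exp_pos _), ← Real.exp_sub]
    refine ENNReal.ofReal_le_ofReal (Real.exp_le_exp.2 ?_)
    have hφ : φ x ≤ ‖φ‖ := (abs_le.1 (φ.norm_coe_le_norm x)).2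
    linarith

end ChainSetting
end Upper2

section ConvUpper
namespace ChainSetting
variable (S : ChainSetting E)

lemma muc_comb (μ₁ μ₂ : Measure E) (a b : ℝ≥0∞) :
    S.muc (a • μ₁ + b • μ₂) = a • S.muc μ₁ + b • S.muc μ₂ := by
  unfold muc
  have : (a • μ₁ + b • μ₂).prod S.lam = a • μ₁.prod S.lam + b • μ₂.prod S.lam := by
    ext s hs
    simp only [Measure.prod_apply hs, Measure.add_apply, Measure.smul_apply, lintegral_add_measure,
      lintegral_smul_measure]
  rw [this, withDensity_add_measure, withDensity_smul_measure, withDensity_smul_measure]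

lemma Ihat_convex (μ₁ μ₂ : Measure E) (a b : ℝ≥0∞) (hab : a + b = 1) :
    S.Ihat0 (a • μ₁ + b • μ₂) ≤ a * S.Ihat0 μ₁ + b * S.Ihat0 μ₂ := by
  by_cases ha : a = 0
  · subst ha
    have : b = 1 := by simpa using hab
    simp [this]
  by_cases hb : b = 0
  · subst hb
    have : a = 1 := by simpa using hab
    simp [this]
  have haf : a ≠ ∞ := by
    rintro rfl; simp at hab
  have hbf : b ≠ ∞ := by
    rintro rfl; simp at hab
  conv_lhs => unfold Ihat0
  refine iSup_le fun φ => ?_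
  rw [muc_comb]
  set f : E × E → ℝ := fun z => Real.exp (φ z.2 - φ z.1) - 1
  by_cases hi : Integrable f (a • S.muc μ₁ + b • S.muc μ₂)
  · rw [integrable_add_measure, integrable_smul_measure ha haf, integrable_smul_measure hb hbf] at hi
    rw [integral_add_measure (hi.1.smul_measure haf) (hi.2.smul_measure hbf),
      integral_smul_measure, integral_smul_measure]
    rw [neg_add]
    refine ENNReal.ofReal_add_le.trans ?_
    simp only [smul_eq_mul, ← mul_neg]
    rw [ENNReal.ofReal_mul ENNReal.toReal_nonneg, ENNReal.ofReal_mul ENNReal.toReal_nonneg,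
      ENNReal.ofReal_toReal haf, ENNReal.ofReal_toReal hbf]
    gcongr
    · exact le_iSup (fun φ : C(E, ℝ) => ENNReal.ofReal
        (-∫ z : E × E, (Real.exp (φ z.2 - φ z.1) - 1) ∂S.muc μ₁)) φ
    · exact le_iSup (fun φ : C(E, ℝ) => ENNReal.ofReal
        (-∫ z : E × E, (Real.exp (φ z.2 - φ z.1) - 1) ∂S.muc μ₂)) φ
  · rw [integral_undef hi]; simp

lemma pm_integral_cont (f : C(E, ℝ)) :
    Continuous (fun ν : ProbabilityMeasure E => ∫ y, f y ∂(ν : Measure E)) := by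
  have := (ProbabilityMeasure.continuous_integral_boundedContinuousFunction
    (BoundedContinuousFunction.mkOfCompact f))
  exact this

lemma exists_phi (μ : Measure E) [IsProbabilityMeasure μ] (c : ℝ) (hc : (c : EReal) < S.Ihat0 μ) :
    ∃ φ : C(E, ℝ), c < ∫ y, S.gphi φ y ∂μ := by
  rcases lt_or_ge c 0 with h | h
  · refine ⟨0, ?_⟩
    have : ∀ y, S.gphi 0 y = 0 := by
      intro y
      simp [gphi, Pop, S.p_int]
    simp [this, h]
  · have : ENNReal.ofReal c < S.Ihat0 μ := by
      rw [← EReal.coe_ennreal_lt_coe_ennreal_iff, EReal.coe_ennreal_ofReal, max_eq_left h]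
      exact hc
    rw [Ihat_eq, lt_iSup_iff] at this
    obtain ⟨φ, hφ⟩ := this
    exact ⟨φ, (ENNReal.ofReal_lt_ofReal_iff_of_nonneg h).1 hφ⟩

lemma upper_ldp (P : E → Measure (Traj E)) (hP : ∀ x, IsChainLaw S.r S.skel x (P x))
    (E₁ : Set E) (hE₁ : E₁ ⊆ S.E0ᶜ) (C : Set (ProbabilityMeasure E)) (hC : IsClosed C) :
    Filter.limsup (fun T : ℝ => ⨆ x ∈ E₁,
            ((1 / T : ℝ) : EReal) * ENNReal.log (P x {ω : Traj E | toPM (empMeas T ω) ∈ C}))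
          atTop ≤ -(⨅ μ ∈ C, (S.Ihat0 (μ : Measure E) : EReal)) := by
  rw [EReal.le_neg]
  refine le_of_forall_lt fun c hc => ?_
  obtain ⟨c', hc1, hc2⟩ := exists_between hc
  refine lt_of_lt_of_le hc1 ?_
  clear hc1 hc
  induction c' with
  | bot => simp
  | top => simp at hc2
  | coe a =>
  rw [EReal.le_neg]
  have hex : ∀ μ ∈ C, ∃ φ : C(E, ℝ), a < ∫ y, S.gphi φ y ∂(μ : Measure E) := fun μ hμ =>
    S.exists_phi _ a (hc2.trans_le (iInf₂_le μ hμ))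
  obtain ⟨t, ht⟩ := hC.isCompact.elim_finite_subcover
    (fun φ : C(E, ℝ) => {ν : ProbabilityMeasure E | a < ∫ y, S.gphi φ y ∂(ν : Measure E)})
    (fun φ => isOpen_lt continuous_const (pm_integral_cont _))
    (fun μ hμ => by
      obtain ⟨φ, hφ⟩ := hex μ hμ
      exact mem_iUnion.2 ⟨φ, hφ⟩)
  set K : ℝ := 1 + ∑ φ ∈ t, Real.exp (2 * ‖φ‖) with hK
  have hK0 : 0 < K := by
    have : 0 ≤ ∑ φ ∈ t, Real.exp (2 * ‖φ‖) := Finset.sum_nonneg fun _ _ => (Real.exp_pos _).le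
    linarith
  have hbd : ∀ T : ℝ, 0 < T → ∀ x ∈ E₁,
      P x {ω : Traj E | toPM (empMeas T ω) ∈ C} ≤ ENNReal.ofReal (K * Real.exp (- (a * T))) := by
    intro T hT x hx
    have hx0 : 0 < S.r x := lt_of_le_of_ne (S.r_nonneg x) fun h => hE₁ hx h.symm
    calc P x {ω : Traj E | toPM (empMeas T ω) ∈ C}
        ≤ P x (⋃ φ ∈ t, {ω | a < ∫ y, S.gphi φ y ∂(toPM (empMeas T ω) : Measure E)}) := by
          refine measure_mono fun ω hω => ?_
          have := ht hω
          simpa using this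
      _ ≤ ∑ φ ∈ t, P x {ω | a < ∫ y, S.gphi φ y ∂(toPM (empMeas T ω) : Measure E)} :=
          measure_biUnion_finset_le _ _
      _ ≤ ∑ φ ∈ t, ENNReal.ofReal (Real.exp (2 * ‖φ‖ - a * T)) :=
          Finset.sum_le_sum fun φ _ => upper_basic (hP x) hx0 φ hT a
      _ = ENNReal.ofReal (∑ φ ∈ t, Real.exp (2 * ‖φ‖ - a * T)) :=
          (ENNReal.ofReal_sum_of_nonneg fun _ _ => (Real.exp_pos _).le).symm
      _ ≤ _ := by
          refine ENNReal.ofReal_le_ofReal ?_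
          have : ∑ φ ∈ t, Real.exp (2 * ‖φ‖ - a * T) = (∑ φ ∈ t, Real.exp (2 * ‖φ‖)) * Real.exp (-(a * T)) := by
            rw [Finset.sum_mul]
            refine Finset.sum_congr rfl fun φ _ => ?_
            rw [← Real.exp_add]; rfl
          rw [this]
          have := Real.exp_pos (-(a * T))
          gcongr
          rw [hK]; linarith
  have hle : ∀ᶠ T : ℝ in atTop, (⨆ x ∈ E₁,
      ((1 / T : ℝ) : EReal) * ENNReal.log (P x {ω : Traj E | toPM (empMeas T ω) ∈ C})) ≤
      ((Real.log K / T - a : ℝ) : EReal) := by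
    filter_upwards [eventually_gt_atTop 0] with T hT
    refine iSup₂_le fun x hx => ?_
    have h1 := ENNReal.log_le_log (hbd T hT x hx)
    rw [ENNReal.log_ofReal_of_pos (by positivity), Real.log_mul hK0.ne' (Real.exp_pos _).ne',
      Real.log_exp] at h1
    calc _ ≤ ((1 / T : ℝ) : EReal) * ((Real.log K + -(a * T) : ℝ) : EReal) :=
          mul_le_mul_of_nonneg_left h1 (by exact_mod_cast (by positivity : 0 ≤ 1 / T))
      _ = _ := by
          rw [← EReal.coe_mul]
          congr 1
          field_simp
          ring
  refine (limsup_le_limsup hle).trans ?_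
  have hlim : Tendsto (fun T : ℝ => ((Real.log K / T - a : ℝ) : EReal)) atTop (𝓝 ((-a : ℝ) : EReal)) := by
    refine (continuous_coe_real_ereal.tendsto _).comp ?_
    have : Tendsto (fun T : ℝ => Real.log K / T) atTop (𝓝 0) := tendsto_const_nhds.div_atTop tendsto_id
    simpa using this.sub_const a
  rw [hlim.limsup_eq]
  simp

end ChainSetting
end ConvUpper

section Low1
namespace ChainSetting
variable (S : ChainSetting E)
variable {V : Type*} [NormedAddCommGroup V] [NormedSpace ℝ V] [MeasurableSpace V] [BorelSpace V]
  [SecondCountableTopology V]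

/-- average over the first coordinate -/
def Av (h : E × V → ℝ≥0∞) (v : V) : ℝ≥0∞ := ∫⁻ x, h (x, v) ∂S.lam

lemma Dop_mono (F : E → V) {h h' : E × V → ℝ≥0∞} (H : h ≤ h') : S.Dop F h ≤ S.Dop F h' := by
  intro q
  unfold Dop
  refine lintegral_mono fun s => lintegral_mono fun y => ?_
  exact mul_le_mul_right (H _) _

lemma Dop_iter_mono (F : E → V) (n : ℕ) {h h' : E × V → ℝ≥0∞} (H : h ≤ h') :
    (S.Dop F)^[n] h ≤ (S.Dop F)^[n] h' :=
  (show Monotone (S.Dop F) from fun _ _ H => S.Dop_mono F H).iterate n H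

lemma Dop_smul (F : E → V) {c : ℝ≥0∞} (hc : c ≠ ∞) (h : E × V → ℝ≥0∞) :
    S.Dop F (fun q => c * h q) = fun q => c * S.Dop F h q := by
  ext q
  unfold Dop
  rw [← lintegral_const_mul' _ _ hc]
  refine lintegral_congr fun s => ?_
  rw [← lintegral_const_mul' _ _ hc]
  refine lintegral_congr fun y => ?_
  ring

lemma Dop_iter_smul (F : E → V) (n : ℕ) {c : ℝ≥0∞} (hc : c ≠ ∞) (h : E × V → ℝ≥0∞) :
    (S.Dop F)^[n] (fun q => c * h q) = fun q => c * (S.Dop F)^[n] h q := by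
  induction n generalizing h with
  | zero => rfl
  | succ n ih => rw [Function.iterate_succ_apply, Function.iterate_succ_apply, S.Dop_smul F hc, ih]

lemma Dop_shift (F : E → V) (w : V) (h : E × V → ℝ≥0∞) (x : E) (v : V) :
    S.Dop F (fun q => h (q.1, q.2 + w)) (x, v) = S.Dop F h (x, v + w) := by
  unfold Dop
  simp only [add_right_comm]

lemma Dop_iter_shift (F : E → V) (n : ℕ) (w : V) (h : E × V → ℝ≥0∞) (x : E) (v : V) :
    (S.Dop F)^[n] (fun q => h (q.1, q.2 + w)) (x, v) = (S.Dop F)^[n] h (x, v + w) := by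
  induction n generalizing h with
  | zero => rfl
  | succ n ih =>
    rw [Function.iterate_succ_apply, Function.iterate_succ_apply, ← ih]
    have : (S.Dop F fun q => h (q.1, q.2 + w)) = fun q => S.Dop F h (q.1, q.2 + w) :=
      funext fun q => S.Dop_shift F w h q.1 q.2
    rw [this]

lemma measurable_Dop_iter {F : E → V} (hF : Measurable F) (n : ℕ) {h : E × V → ℝ≥0∞}
    (hh : Measurable h) : Measurable ((S.Dop F)^[n] h) := by
  induction n with
  | zero => exact hh
  | succ n ih => rw [Function.iterate_succ_apply']; exact measurable_Dop hF ih

lemma Dop_tsum {ι : Type*} [Countable ι] {F : E → V} (hF : Measurable F) (h : ι → E × V → ℝ≥0∞)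
    (hh : ∀ i, Measurable (h i)) :
    S.Dop F (fun q => ∑' i, h i q) = fun q => ∑' i, S.Dop F (h i) q := by
  ext ⟨x, v⟩
  unfold Dop
  have hd := S.measurable_dens
  have h1 : ∀ i, Measurable (fun q : ℝ × E => S.dens x q.1 q.2 * h i (q.2, v + q.1 • F x)) := by
    intro i
    refine Measurable.mul ?_ ?_
    · exact hd.comp (measurable_const.prodMk measurable_id)
    · refine (hh i).comp (measurable_snd.prodMk ?_)
      fun_prop
  rw [← lintegral_tsum]
  · refine lintegral_congr fun s => ?_
    rw [← lintegral_tsum]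
    · refine lintegral_congr fun y => ?_
      rw [ENNReal.tsum_mul_left]
    · intro i
      exact ((h1 i).comp (measurable_const.prodMk measurable_id)).aemeasurable
  · intro i
    exact (h1 i).lintegral_prod_right'.aemeasurable

lemma Dop_iter_tsum {ι : Type*} [Countable ι] {F : E → V} (hF : Measurable F) (n : ℕ)
    (h : ι → E × V → ℝ≥0∞) (hh : ∀ i, Measurable (h i)) :
    (S.Dop F)^[n] (fun q => ∑' i, h i q) = fun q => ∑' i, (S.Dop F)^[n] (h i) q := by
  induction n generalizing h with
  | zero => rfl
  | succ n ih =>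
    rw [Function.iterate_succ_apply, S.Dop_tsum hF h hh, ih _ (fun i => measurable_Dop hF (hh i))]
    rfl

lemma dens_lint (x : E) (s : ℝ) :
    ∫⁻ y, S.dens x s y ∂S.lam = ENNReal.ofReal (S.r x * Real.exp (-(S.r x * s))) := by
  unfold dens
  rw [lintegral_const_mul _ (S.p_cont_right x).measurable.ennreal_ofReal, S.p_lint, mul_one]

lemma Dop_snd (F : E → V) (f : V → ℝ≥0∞) (x : E) (v : V) :
    S.Dop F (fun q => f q.2) (x, v) =
      ∫⁻ s in Ioi (0 : ℝ), ENNReal.ofReal (S.r x * Real.exp (-(S.r x * s))) * f (v + s • F x) := by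
  unfold Dop
  refine lintegral_congr fun s => ?_
  dsimp only
  rw [lintegral_mul_const, S.dens_lint]
  unfold dens
  exact (S.p_cont_right x).measurable.ennreal_ofReal.const_mul _

lemma Dop_one_le (F : E → V) : S.Dop F (fun _ => 1) ≤ fun _ => 1 := by
  rintro ⟨x, v⟩
  rw [S.Dop_snd F (fun _ => 1)]
  simp only [mul_one]
  rcases (S.r_nonneg x).eq_or_lt with hr | hr
  · simp [← hr]
  · rw [lint_exp_Ioi hr]; simp

lemma Dop_iter_one_le (F : E → V) (n : ℕ) : (S.Dop F)^[n] (fun _ => 1) ≤ fun _ => 1 := by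
  induction n with
  | zero => exact le_rfl
  | succ n ih =>
    rw [Function.iterate_succ_apply']
    exact (S.Dop_mono F ih).trans (S.Dop_one_le F)

lemma exists_c : ∃ c : ℝ, 0 < c ∧ c ≤ 1 ∧ ∀ x y, c ≤ S.p x y := by
  obtain ⟨z, hz⟩ := S.p_cont.exists_forall_le_of_hasCompactMulSupport (by
    exact IsCompact.of_isClosed_subset isCompact_univ (isClosed_mulTSupport _) (subset_univ _))
  refine ⟨min (S.p z.1 z.2) 1, lt_min (S.p_pos _ _) one_pos, min_le_right _ _, fun x y => ?_⟩
  exact (min_le_left _ _).trans (hz (x, y))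

lemma Dop_ge_Av (F : E → V) {c : ℝ} (hc : ∀ x y, c ≤ S.p x y) (h : E × V → ℝ≥0∞) (q : E × V) :
    ENNReal.ofReal c * S.Dop F (fun q => S.Av h q.2) q ≤ S.Dop F h q := by
  obtain ⟨x, v⟩ := q
  rw [S.Dop_snd]
  unfold Dop
  rw [← lintegral_const_mul' _ _ ENNReal.ofReal_ne_top]
  refine lintegral_mono fun s => ?_
  simp only [Av]
  rw [← lintegral_const_mul' _ _ ENNReal.ofReal_ne_top, ← lintegral_const_mul' _ _ ENNReal.ofReal_ne_top]
  refine lintegral_mono fun y => ?_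
  simp only [dens]
  rw [← mul_assoc, mul_comm (ENNReal.ofReal c)]
  gcongr
  exact hc x y

lemma Av_mono {h h' : E × V → ℝ≥0∞} (H : h ≤ h') : S.Av h ≤ S.Av h' :=
  fun _ => lintegral_mono fun _ => H _

lemma Av_snd (f : V → ℝ≥0∞) (v : V) : S.Av (fun q => f q.2) v = f v := by
  simp [Av]

lemma Av_Dop_ge (F : E → V) {c : ℝ} (hc1 : c ≤ 1) (hc : ∀ x y, c ≤ S.p x y) (n : ℕ)
    (h : E × V → ℝ≥0∞) (v : V) :
    ENNReal.ofReal c * S.Av ((S.Dop F)^[n] (fun q => S.Av h q.2)) v ≤ S.Av ((S.Dop F)^[n] h) v := by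
  cases n with
  | zero =>
    simp only [Function.iterate_zero, id]
    rw [S.Av_snd]
    calc _ ≤ 1 * S.Av h v := by
          gcongr
          simpa using hc1
      _ = _ := one_mul _
  | succ n =>
    have h1 : (fun q => ENNReal.ofReal c * S.Dop F (fun q => S.Av h q.2) q) ≤ S.Dop F h :=
      fun q => S.Dop_ge_Av F hc h q
    have h2 := S.Dop_iter_mono F n h1
    rw [S.Dop_iter_smul F n ENNReal.ofReal_ne_top] at h2
    rw [Function.iterate_succ_apply, Function.iterate_succ_apply]
    refine le_trans ?_ (S.Av_mono h2 v)
    simp only [Av]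
    rw [lintegral_const_mul' _ _ ENNReal.ofReal_ne_top]

/-- averaged law of the additive functional after `n` jumps -/
def Mn (F : E → V) (n : ℕ) (B : Set V) : ℝ≥0∞ :=
  S.Av ((S.Dop F)^[n] (fun q => B.indicator 1 q.2)) 0

lemma Mn_mono (F : E → V) (n : ℕ) {B B' : Set V} (h : B ⊆ B') : S.Mn F n B ≤ S.Mn F n B' := by
  refine S.Av_mono (S.Dop_iter_mono F n fun q => ?_) 0
  exact indicator_le_indicator_of_subset h (fun _ => bot_le) _

lemma Mn_le_one (F : E → V) (n : ℕ) (B : Set V) : S.Mn F n B ≤ 1 := by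
  have h1 : (fun q : E × V => (B.indicator 1 q.2 : ℝ≥0∞)) ≤ fun _ => 1 := fun q =>
    indicator_le_self' (fun _ _ => bot_le) _
  refine (S.Av_mono ((S.Dop_iter_mono F n h1).trans (S.Dop_iter_one_le F n)) 0).trans ?_
  simp [Av]

lemma Mn_zero (F : E → V) {B : Set V} (h : (0 : V) ∈ B) : S.Mn F 0 B = 1 := by
  simp [Mn, Av, h]

/-- translation -/
lemma Mn_shift (F : E → V) (n : ℕ) {B B' : Set V} (v : V) (h : ∀ b ∈ B, b + v ∈ B') :
    S.Mn F n B ≤ S.Av ((S.Dop F)^[n] (fun q => B'.indicator 1 q.2)) v := by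
  unfold Mn Av
  refine lintegral_mono fun x => ?_
  have := S.Dop_iter_shift F n v (fun q => B'.indicator 1 q.2) x 0
  rw [zero_add] at this
  rw [← this]
  refine S.Dop_iter_mono F n (fun q => ?_) (x, 0)
  by_cases hq : q.2 ∈ B
  · simp [hq, h _ hq]
  · simp [hq]

lemma Mn_add (F : E → V) {c : ℝ} (hc1 : c ≤ 1) (hc : ∀ x y, c ≤ S.p x y) (n m : ℕ)
    {B B' B'' : Set V} (h : ∀ b ∈ B, ∀ b' ∈ B', b' + b ∈ B'') :
    (ENNReal.ofReal c * S.Mn F n B) * (ENNReal.ofReal c * S.Mn F m B') ≤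
      ENNReal.ofReal c * S.Mn F (n + m) B'' := by
  have h1 := S.Av_Dop_ge F hc1 hc n ((S.Dop F)^[m] (fun q => B''.indicator 1 q.2)) 0
  rw [← Function.iterate_add_apply] at h1
  refine le_trans ?_ (mul_le_mul_right h1 _)
  have h2 : (fun q : E × V => S.Mn F m B' * B.indicator 1 q.2) ≤
      (fun q => S.Av ((S.Dop F)^[m] (fun q => B''.indicator 1 q.2)) q.2) := by
    intro q
    by_cases hq : q.2 ∈ B
    · simp only [hq, indicator_of_mem, Pi.one_apply, mul_one]
      exact S.Mn_shift F m q.2 (fun b hb => h _ hq b hb)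
    · simp [hq]
  have h3 := S.Av_mono (S.Dop_iter_mono F n h2) 0
  have hne : S.Mn F m B' ≠ ∞ := ((S.Mn_le_one F m B').trans_lt one_lt_top).ne
  rw [S.Dop_iter_smul F n hne] at h3
  have h4 : S.Mn F m B' * S.Mn F n B ≤ S.Av ((S.Dop F)^[n]
      (fun q => S.Av ((S.Dop F)^[m] (fun q => B''.indicator 1 q.2)) q.2)) 0 := by
    refine le_trans (le_of_eq ?_) h3
    rw [Av, lintegral_const_mul' _ _ hne]
    rfl
  calc _ = ENNReal.ofReal c * (ENNReal.ofReal c * (S.Mn F m B' * S.Mn F n B)) := by ring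
    _ ≤ _ := by gcongr

/-- monotonicity on the cone -/
lemma Dop_iter_mono_cone {F : E → V} {tt : V →L[ℝ] ℝ} {R : ℝ} (htt : ∀ x, tt (F x) = 1)
    (hR : ∀ x, ‖F x‖ ≤ R) (n : ℕ) {h h' : E × V → ℝ≥0∞}
    (H : ∀ x v, ‖v‖ ≤ R * tt v → h (x, v) ≤ h' (x, v)) :
    ∀ x v, ‖v‖ ≤ R * tt v → (S.Dop F)^[n] h (x, v) ≤ (S.Dop F)^[n] h' (x, v) := by
  induction n with
  | zero => exact H
  | succ n ih =>
    intro x v hv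
    rw [Function.iterate_succ_apply', Function.iterate_succ_apply']
    conv_lhs => unfold Dop
    conv_rhs => unfold Dop
    refine setLIntegral_mono' measurableSet_Ioi fun s hs => lintegral_mono fun y => ?_
    have hs : 0 < s := hs
    refine mul_le_mul_right (ih _ _ ?_) _
    calc ‖v + s • F x‖ ≤ ‖v‖ + s * ‖F x‖ := by
          refine (norm_add_le _ _).trans ?_
          rw [norm_smul, Real.norm_of_nonneg hs.le]
      _ ≤ R * tt v + s * R := by gcongr; exact hR x
      _ = R * tt (v + s • F x) := by simp [htt]; ring

end ChainSetting
end Low1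

section Sep

lemma semigroup_sep {W : Type*} [NormedAddCommGroup W] [NormedSpace ℝ W] (K : Set W)
    (hne : K.Nonempty) (hadd : ∀ a ∈ K, ∀ b ∈ K, a + b ∈ K) (p : W)
    (hp : p ∉ closure {w : W | ∃ N : ℕ, 0 < N ∧ (N : ℝ) • w ∈ K}) :
    ∃ f : W →L[ℝ] ℝ, (∀ k ∈ K, f k ≤ 0) ∧ 0 < f p := by
  set Q := {w : W | ∃ N : ℕ, 0 < N ∧ (N : ℝ) • w ∈ K} with hQ
  have hn : ∀ n : ℕ, 0 < n → ∀ k ∈ K, (n : ℝ) • k ∈ K := by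
    intro n hn k hk
    induction n, hn using Nat.le_induction with
    | base => simpa using hk
    | succ n _ ih =>
      push_cast
      rw [add_smul, one_smul]
      exact hadd _ ih _ hk
  have hQadd : ∀ a ∈ Q, ∀ b ∈ Q, a + b ∈ Q := by
    rintro a ⟨N, hN, ha⟩ b ⟨M, hM, hb⟩
    refine ⟨N * M, Nat.mul_pos hN hM, ?_⟩
    have := hadd _ (hn M hM _ ha) _ (hn N hN _ hb)
    rw [smul_smul, smul_smul] at this
    rw [smul_add]
    push_cast
    rw [mul_comm (M : ℝ)] at this
    exact this
  have hQrat : ∀ m n : ℕ, 0 < m → 0 < n → ∀ a ∈ Q, ((m : ℝ) / n) • a ∈ Q := by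
    rintro m n hm hn' a ⟨N, hN, ha⟩
    refine ⟨N * n, Nat.mul_pos hN hn', ?_⟩
    have := hn m hm _ ha
    rw [smul_smul] at this ⊢
    convert this using 2
    push_cast
    have : (n : ℝ) ≠ 0 := by positivity
    field_simp
  have hdense : ∀ a : ℝ, 0 < a → a ∈ closure {q : ℝ | ∃ m n : ℕ, 0 < m ∧ 0 < n ∧ q = (m : ℝ) / n} := by
    intro a ha
    rw [Metric.mem_closure_iff]
    intro ε hε
    obtain ⟨q, hq1, hq2⟩ := exists_rat_btwn (show max 0 (a - ε) < a from max_lt ha (by linarith))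
    have hq0 : 0 < q := by
      have : (0 : ℝ) < q := (le_max_left _ _).trans_lt hq1
      exact_mod_cast this
    refine ⟨q, ⟨q.num.toNat, q.den, ?_, q.den_pos, ?_⟩, ?_⟩
    · have := Rat.num_pos.2 hq0
      omega
    · have h1 : ((q.num.toNat : ℕ) : ℤ) = q.num := Int.toNat_of_nonneg (Rat.num_pos.2 hq0).le
      have h2 : ((q.num.toNat : ℕ) : ℝ) = ((q.num : ℤ) : ℝ) := by
        exact_mod_cast congrArg (Int.cast : ℤ → ℝ) h1
      rw [h2]
      exact Rat.cast_def q
    · rw [Real.dist_eq, abs_lt]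
      have := (le_max_right 0 (a - ε)).trans_lt hq1
      constructor <;> linarith
  have hQreal : ∀ a : ℝ, 0 < a → ∀ w ∈ closure Q, a • w ∈ closure Q := by
    intro a ha w hw
    have h1 : ∀ w ∈ Q, a • w ∈ closure Q := by
      intro w hw
      refine map_mem_closure (f := fun t : ℝ => t • w) (by fun_prop) (hdense a ha) ?_
      rintro q ⟨m, n, hm, hn', rfl⟩
      exact hQrat m n hm hn' w hw
    have := map_mem_closure (f := fun w : W => a • w) (by fun_prop) hw h1
    rwa [closure_closure] at this
  have hconv : Convex ℝ (closure Q) := by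
    rw [convex_iff_forall_pos]
    intro x hx y hy a b ha hb _
    exact map_mem_closure₂ continuous_add (hQreal a ha x hx) (hQreal b hb y hy) hQadd
  obtain ⟨f, u, hf, hu⟩ := geometric_hahn_banach_closed_point hconv isClosed_closure hp
  have hfQ : ∀ w ∈ Q, f w < u := fun w hw => hf w (subset_closure hw)
  have hKQ : K ⊆ Q := fun k hk => ⟨1, one_pos, by simpa using hk⟩
  refine ⟨f, fun k hk => ?_, ?_⟩
  · by_contra hc
    push Not at hc
    obtain ⟨n, hn'⟩ := exists_nat_gt (u / f k)
    have h1 := hfQ _ (hKQ (hn (n + 1) (Nat.succ_pos n) k hk))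
    rw [map_smul, smul_eq_mul] at h1
    rw [div_lt_iff₀ hc] at hn'
    push_cast at h1
    nlinarith
  · obtain ⟨k, hk⟩ := hne
    refine lt_of_le_of_lt ?_ hu
    by_contra hc
    push Not at hc
    obtain ⟨n, hn'⟩ := exists_nat_gt (f k / u)
    have h1 := hfQ _ (hQrat 1 (n + 1) one_pos (Nat.succ_pos n) k (hKQ hk))
    rw [map_smul, smul_eq_mul] at h1
    rw [div_lt_iff_of_neg hc] at hn'
    push_cast at h1
    rw [div_mul_eq_mul_div, one_mul, div_lt_iff₀ (by positivity)] at h1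
    nlinarith

namespace ChainSetting
variable (S : ChainSetting E)
variable {V : Type*} [NormedAddCommGroup V] [NormedSpace ℝ V] [MeasurableSpace V] [BorelSpace V]
  [SecondCountableTopology V]

/-- the semigroup of reachable pairs -/
def Kset (F : E → V) (tt : V →L[ℝ] ℝ) (c η : ℝ) : Set (V × ℝ) :=
  {q | ∃ n, ENNReal.ofReal (Real.exp (-q.2)) ≤
    ENNReal.ofReal c * S.Mn F n (Metric.closedBall q.1 (η * tt q.1))}

lemma Kset_add (F : E → V) (tt : V →L[ℝ] ℝ) {c η : ℝ} (hc1 : c ≤ 1)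
    (hc : ∀ x y, c ≤ S.p x y) : ∀ a ∈ S.Kset F tt c η, ∀ b ∈ S.Kset F tt c η,
      a + b ∈ S.Kset F tt c η := by
  rintro ⟨v, h⟩ ⟨n, hn⟩ ⟨v', h'⟩ ⟨m, hm⟩
  refine ⟨n + m, ?_⟩
  simp only [Prod.mk_add_mk] at *
  refine le_trans ?_ (S.Mn_add F hc1 hc n m (B := Metric.closedBall v (η * tt v))
    (B' := Metric.closedBall v' (η * tt v')) ?_)
  · refine le_trans (le_of_eq ?_) (mul_le_mul' hn hm)
    rw [← ENNReal.ofReal_mul (Real.exp_pos _).le, ← Real.exp_add]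
    congr 2; ring
  · intro b hb b' hb'
    rw [mem_closedBall_iff_norm] at *
    calc ‖b' + b - (v + v')‖ = ‖(b - v) + (b' - v')‖ := by congr 1; abel
      _ ≤ ‖b - v‖ + ‖b' - v'‖ := norm_add_le _ _
      _ ≤ η * tt v + η * tt v' := add_le_add hb hb'
      _ = _ := by rw [map_add]; ring

lemma exists_ell (F : E → V) (tt : V →L[ℝ] ℝ) {c η : ℝ} (hc0 : 0 < c) (hc1 : c ≤ 1)
    (hc : ∀ x y, c ≤ S.p x y) (v : V) (h : ℝ)
    (hp : (v, h) ∉ closure {w : V × ℝ | ∃ N : ℕ, 0 < N ∧ (N : ℝ) • w ∈ S.Kset F tt c η}) :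
    ∃ l : V →L[ℝ] ℝ, h < l v ∧ ∀ n w, ENNReal.ofReal c * S.Mn F n (Metric.closedBall w (η * tt w))
      ≤ ENNReal.ofReal (Real.exp (- l w)) := by
  have hle1 : ∀ n B, ENNReal.ofReal c * S.Mn F n B ≤ 1 := by
    intro n B
    refine mul_le_one' (by simpa using hc1) (S.Mn_le_one F n B)
  have hbase : ∀ t : ℝ, -Real.log c ≤ t → ((0 : V), t) ∈ S.Kset F tt c η := by
    intro t ht
    refine ⟨0, ?_⟩
    rw [S.Mn_zero F (by simp), mul_one]
    refine ENNReal.ofReal_le_ofReal ?_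
    rw [← Real.le_log_iff_exp_le hc0]
    linarith
  obtain ⟨f, hf, hfp⟩ := semigroup_sep _ ⟨_, hbase _ le_rfl⟩ (S.Kset_add F tt hc1 hc) _ hp
  set β := f (0, 1) with hβ
  have hfe : ∀ w t, f (w, t) = f (w, 0) + β * t := by
    intro w t
    have : ((w, t) : V × ℝ) = (w, 0) + t • (0, 1) := by simp
    rw [this, map_add, map_smul, smul_eq_mul, mul_comm]
  have hβ0 : β ≤ 0 := by
    by_contra hcon
    push Not at hcon
    have := hf _ (hbase (max (-Real.log c) 1) (le_max_left _ _))
    rw [hfe, show ((0 : V), (0 : ℝ)) = 0 from rfl, map_zero, zero_add] at this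
    have : 0 < max (-Real.log c) 1 := lt_max_of_lt_right one_pos
    nlinarith
  have hK0 : ∀ q ∈ S.Kset F tt c η, 0 ≤ q.2 := by
    rintro q ⟨n, hn⟩
    have := hn.trans (hle1 _ _)
    rw [ENNReal.ofReal_le_one, Real.exp_le_one_iff] at this
    linarith
  set δ := f (v, h) / (2 * (|h| + 1)) with hδ
  have hδ0 : 0 < δ := by positivity
  have hδh : δ * h < f (v, h) := by
    have : δ * h ≤ δ * |h| := by gcongr; exact le_abs_self h
    have h2 : δ * (2 * (|h| + 1)) = f (v, h) := by rw [hδ]; field_simp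
    nlinarith [abs_nonneg h]
  have hγ : 0 < δ - β := by linarith
  let l : V →L[ℝ] ℝ := (δ - β)⁻¹ • (f.comp (ContinuousLinearMap.inl ℝ V ℝ))
  have hl : ∀ w, l w = (δ - β)⁻¹ * f (w, 0) := fun w => rfl
  have hlK : ∀ q ∈ S.Kset F tt c η, l q.1 ≤ q.2 := by
    intro q hq
    have h1 := hf q hq
    have h2 := hK0 q hq
    rw [hl, inv_mul_le_iff₀ hγ]
    have h3 := hfe q.1 q.2
    have h4 : f q = f (q.1, q.2) := rfl
    nlinarith
  refine ⟨l, ?_, fun n w => ?_⟩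
  · rw [hl, lt_inv_mul_iff₀ hγ]
    rw [hfe] at hδh
    linarith
  · set a := ENNReal.ofReal c * S.Mn F n (Metric.closedBall w (η * tt w)) with ha
    by_cases ha0 : a = 0
    · rw [ha0]; exact bot_le
    have haf : a ≠ ∞ := ((hle1 _ _).trans_lt one_lt_top).ne
    have hpos : 0 < a.toReal := ENNReal.toReal_pos ha0 haf
    have := hlK (w, -Real.log a.toReal) ⟨n, by
      simp only [neg_neg, Real.exp_log hpos]
      exact ENNReal.ofReal_toReal_le⟩
    rw [← ENNReal.ofReal_toReal haf]
    refine ENNReal.ofReal_le_ofReal ?_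
    rw [← Real.log_le_iff_le_exp hpos]
    simp only at this
    linarith

end ChainSetting
end Sep

section Cover
namespace ChainSetting
variable (S : ChainSetting E)
variable {V : Type*} [NormedAddCommGroup V] [NormedSpace ℝ V] [MeasurableSpace V] [BorelSpace V]
  [SecondCountableTopology V]

lemma cover_pt [FiniteDimensional ℝ V] (tt : V →L[ℝ] ℝ) {R : ℝ} (hR0 : 0 < R) (l : V →L[ℝ] ℝ)
    {ε η : ℝ} (hε : 0 < ε) (hη : 0 < η) :
    ∃ (t : Set V) (C : ℝ), t.Finite ∧ (∀ a ∈ t, tt a = 1) ∧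
      ∀ v, ‖v‖ ≤ R * tt v → l v - ε * tt v ≤ C ∨ ∃ j : ℕ, ∃ a ∈ t,
        v ∈ Metric.closedBall (((j : ℝ) + 1) • a) (η * (j + 1)) ∧
        l v - ε * tt v ≤ l (((j : ℝ) + 1) • a) + (‖l‖ * η * (j + 1) - ε * j) := by
  have hproper : ProperSpace V := FiniteDimensional.proper ℝ V
  have hK : IsCompact {u : V | tt u = 1 ∧ ‖u‖ ≤ R} := by
    refine IsCompact.of_isClosed_subset (isCompact_closedBall (0 : V) R) ?_ ?_
    · exact (isClosed_eq tt.continuous continuous_const).inter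
        (isClosed_le continuous_norm continuous_const)
    · intro u hu
      simpa using hu.2
  obtain ⟨t, htK, htf, hcov⟩ := hK.finite_cover_balls (e := η / 2) (by positivity)
  set J := max 1 (2 * R / η) with hJ
  refine ⟨t, ‖l‖ * (R * J), htf, fun a ha => (htK ha).1, fun v hv => ?_⟩
  have htv : 0 ≤ tt v := by
    by_contra hcon
    push Not at hcon
    nlinarith [norm_nonneg v]
  by_cases hvJ : tt v ≤ J
  · left
    have h1 : l v ≤ ‖l‖ * ‖v‖ := (le_abs_self _).trans (l.le_opNorm v)
    have h2 : ‖l‖ * ‖v‖ ≤ ‖l‖ * (R * J) := by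
      gcongr
      exact hv.trans (by gcongr)
    nlinarith
  · right
    push Not at hvJ
    have hJ1 : 1 ≤ J := le_max_left _ _
    have hτ : 0 < tt v := by linarith
    have hu : (tt v)⁻¹ • v ∈ {u : V | tt u = 1 ∧ ‖u‖ ≤ R} := by
      constructor
      · rw [map_smul, smul_eq_mul, inv_mul_cancel₀ hτ.ne']
      · rw [norm_smul, norm_inv, Real.norm_of_nonneg htv, inv_mul_le_iff₀ hτ]
        linarith
    have := hcov hu
    simp only [mem_iUnion, exists_prop] at this
    obtain ⟨a, ha, hua⟩ := this
    refine ⟨⌊tt v⌋₊, a, ha, ?_⟩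
    have hj1 : (⌊tt v⌋₊ : ℝ) ≤ tt v := Nat.floor_le htv
    have hj2 : tt v < ⌊tt v⌋₊ + 1 := Nat.lt_floor_add_one _
    set j : ℝ := (⌊tt v⌋₊ : ℝ)
    have hball : ‖v - (j + 1) • a‖ ≤ η * (j + 1) := by
      rw [mem_ball_iff_norm] at hua
      have e : v - (j + 1) • a = tt v • ((tt v)⁻¹ • v - a) + (tt v - (j + 1)) • a := by
        rw [smul_sub, smul_smul, mul_inv_cancel₀ hτ.ne', one_smul, sub_smul]
        abel
      have h1 : ‖tt v • ((tt v)⁻¹ • v - a)‖ ≤ (j + 1) * (η / 2) := by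
        rw [norm_smul, Real.norm_of_nonneg htv]
        gcongr
      have h2 : ‖(tt v - (j + 1)) • a‖ ≤ R := by
        rw [norm_smul, Real.norm_eq_abs]
        have : |tt v - (j + 1)| ≤ 1 := by rw [abs_le]; constructor <;> linarith
        calc _ ≤ 1 * R := by
              gcongr
              exact (htK ha).2
          _ = R := one_mul R
      have h3 : R ≤ (η / 2) * (j + 1) := by
        have : 2 * R / η ≤ j + 1 := (le_max_right _ _).trans (hvJ.le.trans hj2.le)
        rw [div_le_iff₀ hη] at this
        linarith
      rw [e]
      refine (norm_add_le _ _).trans ?_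
      linarith
    refine ⟨by rwa [mem_closedBall_iff_norm], ?_⟩
    have h1 : l v - l ((j + 1) • a) ≤ ‖l‖ * (η * (j + 1)) := by
      rw [← map_sub]
      exact ((le_abs_self _).trans (l.le_opNorm _)).trans (by gcongr)
    nlinarith

lemma cover_bound [FiniteDimensional ℝ V] {F : E → V} (hF : Measurable F) (tt : V →L[ℝ] ℝ)
    {R : ℝ} (hR0 : 0 < R) (htt : ∀ x, tt (F x) = 1) (hR : ∀ x, ‖F x‖ ≤ R) {c η : ℝ} (hc0 : 0 < c)
    (hη : 0 < η) (l : V →L[ℝ] ℝ)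
    (hl : ∀ n w, ENNReal.ofReal c * S.Mn F n (Metric.closedBall w (η * tt w))
      ≤ ENNReal.ofReal (Real.exp (- l w))) {ε : ℝ} (hε : 0 < ε) :
    ∃ C : ℝ≥0∞, C ≠ ∞ ∧ ∀ n, S.Av ((S.Dop F)^[n]
      (fun q => ENNReal.ofReal (Real.exp (l q.2 - ε * tt q.2)))) 0 ≤ C := by
  set η' := min η (ε / (4 * (‖l‖ + 1))) with hη'
  have hη0 : 0 < η' := lt_min hη (by positivity)
  have hlη : ‖l‖ * η' ≤ ε / 4 := by
    have h1 : η' ≤ ε / (4 * (‖l‖ + 1)) := min_le_right _ _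
    rw [le_div_iff₀ (by positivity)] at h1
    nlinarith [norm_nonneg l]
  obtain ⟨t, C0, htf, ht1, hpt⟩ := cover_pt tt hR0 l hε hη0
  have htfin : Finite t := htf
  let b : ℕ → ℝ := fun j => ‖l‖ * η' * (j + 1) - ε * j
  let h : Unit ⊕ (ℕ × t) → E × V → ℝ≥0∞ := Sum.elim
    (fun _ _ => ENNReal.ofReal (Real.exp C0))
    (fun i q => ENNReal.ofReal (Real.exp (l (((i.1 : ℝ) + 1) • (i.2 : V)) + b i.1)) *
      (Metric.closedBall (((i.1 : ℝ) + 1) • (i.2 : V)) (η' * (i.1 + 1))).indicator 1 q.2)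
  let κ : Unit ⊕ (ℕ × t) → ℝ≥0∞ := Sum.elim
    (fun _ => ENNReal.ofReal (Real.exp C0))
    (fun i => (ENNReal.ofReal c)⁻¹ * ENNReal.ofReal (Real.exp (b i.1)))
  have hhm : ∀ i, Measurable (h i) := by
    rintro (i | i)
    · exact measurable_const
    · refine Measurable.const_mul ?_ _
      exact (measurable_one.indicator measurableSet_closedBall).comp measurable_snd
  refine ⟨∑' i, κ i, ?_, fun n => ?_⟩
  · rw [Summable.tsum_sum ENNReal.summable ENNReal.summable]
    simp only [κ, Sum.elim_inl, Sum.elim_inr]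
    refine ENNReal.add_ne_top.2 ⟨?_, ?_⟩
    · simp
    · rw [ENNReal.tsum_prod (f := fun (j : ℕ) (_ : t) =>
        (ENNReal.ofReal c)⁻¹ * ENNReal.ofReal (Real.exp (b j)))]
      have hfin : Fintype t := Fintype.ofFinite t
      simp only [tsum_fintype, Finset.sum_const, nsmul_eq_mul]
      rw [ENNReal.tsum_mul_left, ENNReal.tsum_mul_left]
      refine ENNReal.mul_ne_top (by simp) (ENNReal.mul_ne_top (by simp [hc0]) ?_)
      have hq : ENNReal.ofReal (Real.exp (-(ε / 2))) < 1 := by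
        rw [ENNReal.ofReal_lt_one, Real.exp_lt_one_iff]; linarith
      refine ne_top_of_le_ne_top (b := ∑' j : ℕ, ENNReal.ofReal (Real.exp (ε / 4)) *
        ENNReal.ofReal (Real.exp (-(ε / 2))) ^ j) ?_ ?_
      · rw [ENNReal.tsum_mul_left, ENNReal.tsum_geometric]
        refine ENNReal.mul_ne_top (by simp) ?_
        simp only [ne_eq, ENNReal.inv_eq_top]
        exact (tsub_pos_of_lt hq).ne'
      · refine ENNReal.tsum_le_tsum fun j => ?_
        rw [← ENNReal.ofReal_pow (Real.exp_pos _).le, ← ENNReal.ofReal_mul (Real.exp_pos _).le,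
          ← Real.exp_nat_mul, ← Real.exp_add]
        refine ENNReal.ofReal_le_ofReal (Real.exp_le_exp.2 ?_)
        simp only [b]
        have : (0 : ℝ) ≤ j := Nat.cast_nonneg j
        nlinarith
  · have hpt' : ∀ (x : E) (v : V), ‖v‖ ≤ R * tt v →
        ENNReal.ofReal (Real.exp (l v - ε * tt v)) ≤ ∑' i, h i (x, v) := by
      intro x v hv
      rcases hpt v hv with h1 | ⟨j, a, ha, hb, h1⟩
      · refine le_trans ?_ (ENNReal.le_tsum (Sum.inl ()))
        exact ENNReal.ofReal_le_ofReal (Real.exp_le_exp.2 h1)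
      · refine le_trans ?_ (ENNReal.le_tsum (Sum.inr (j, ⟨a, ha⟩)))
        simp only [h, Sum.elim_inr, indicator_of_mem hb, Pi.one_apply, mul_one]
        exact ENNReal.ofReal_le_ofReal (Real.exp_le_exp.2 h1)
    have h1 : S.Av ((S.Dop F)^[n] (fun q => ENNReal.ofReal (Real.exp (l q.2 - ε * tt q.2)))) 0 ≤
        S.Av ((S.Dop F)^[n] (fun q => ∑' i, h i q)) 0 := by
      refine lintegral_mono fun x => ?_
      exact S.Dop_iter_mono_cone htt hR n
        (h := fun q => ENNReal.ofReal (Real.exp (l q.2 - ε * tt q.2))) hpt' x 0 (by simp)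
    refine h1.trans ?_
    rw [S.Dop_iter_tsum hF n h hhm]
    unfold Av
    have hm : ∀ i, AEMeasurable (fun x : E => (S.Dop F)^[n] (h i) (x, (0:V))) S.lam := fun i =>
      ((S.measurable_Dop_iter hF n (hhm i)).comp (measurable_id.prodMk measurable_const)).aemeasurable
    dsimp only
    rw [lintegral_tsum hm]
    refine ENNReal.tsum_le_tsum ?_
    rintro (i | ⟨j, a, ha⟩)
    · simp only [h, κ, Sum.elim_inl]
      have e := S.Dop_iter_smul F n (ENNReal.ofReal_ne_top (r := Real.exp C0)) (fun _ => 1)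
      simp only [mul_one] at e
      rw [e]
      refine (lintegral_mono (g := fun _ => ENNReal.ofReal (Real.exp C0)) fun x => ?_).trans ?_
      · exact (mul_le_mul_right (S.Dop_iter_one_le F n (x, 0)) _).trans (by simp)
      · simp
    · simp only [h, κ, Sum.elim_inr]
      rw [S.Dop_iter_smul F n ENNReal.ofReal_ne_top, lintegral_const_mul' _ _ ENNReal.ofReal_ne_top]
      set w := ((j : ℝ) + 1) • a with hw
      have htw : tt w = j + 1 := by rw [hw, map_smul, ht1 a ha]; simp
      have hM : S.Mn F n (Metric.closedBall w (η' * (j + 1))) ≤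
          (ENNReal.ofReal c)⁻¹ * ENNReal.ofReal (Real.exp (- l w)) := by
        rw [← ENNReal.mul_le_iff_le_inv (by simpa using hc0) ENNReal.ofReal_ne_top]
        refine le_trans ?_ (hl n w)
        gcongr
        refine S.Mn_mono F n (Metric.closedBall_subset_closedBall ?_)
        rw [htw]
        gcongr
        exact min_le_left _ _
      calc _ ≤ ENNReal.ofReal (Real.exp (l w + b j)) *
            ((ENNReal.ofReal c)⁻¹ * ENNReal.ofReal (Real.exp (- l w))) := mul_le_mul_right hM _
        _ = (ENNReal.ofReal c)⁻¹ * (ENNReal.ofReal (Real.exp (l w + b j)) *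
            ENNReal.ofReal (Real.exp (- l w))) := by ring
        _ = _ := by
            rw [← ENNReal.ofReal_mul (Real.exp_pos _).le, ← Real.exp_add]
            congr 3; ring

end ChainSetting
end Cover

section Key
namespace ChainSetting
variable (S : ChainSetting E)

lemma gphi_le (μ : Measure E) [IsProbabilityMeasure μ] (hI : S.Ihat0 μ ≠ ∞) (φ : C(E, ℝ)) :
    ∫ x, S.gphi φ x ∂μ ≤ (S.Ihat0 μ).toReal := by
  rw [← ENNReal.ofReal_le_iff_le_toReal hI, S.Ihat_eq]
  exact le_iSup (fun φ : C(E, ℝ) => ENNReal.ofReal (∫ x, S.gphi φ x ∂μ)) φ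

lemma Pop_finsum (n : ℕ) (a : ℕ → ℝ) {w : ℕ → E → ℝ} (hw : ∀ n, Continuous (w n)) (x : E) :
    S.Pop (fun y => ∑ i ∈ Finset.range n, a i * w i y) x =
      ∑ i ∈ Finset.range n, a i * S.Pop (w i) x := by
  unfold Pop
  have hp := S.p_cont_right x
  simp only [Finset.mul_sum]
  rw [integral_finsetSum]
  · refine Finset.sum_congr rfl fun i _ => ?_
    rw [← integral_const_mul]
    congr 1; ext y; ring
  · intro i _
    have := hw i
    exact int_of_cont _ (by fun_prop)

lemma superharm (g : C(E, ℝ)) {δ : ℝ} (hδ : 0 < δ) (hg : ∀ x, g x + δ ≤ S.r x) {w : ℕ → E → ℝ}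
    (hw : ∀ n, Continuous (w n)) (hw0 : ∀ x, w 0 x = 1) (hwn : ∀ n x, 0 ≤ w n x)
    (hws : ∀ n x, w (n + 1) x = S.r x / (S.r x - g x) * S.Pop (w n) x)
    {C : ℝ} (hC : ∀ n x, w n x ≤ C) (μ : Measure E) [IsProbabilityMeasure μ] (hI : S.Ihat0 μ ≠ ∞)
    {ρ : ℝ} (hρ0 : 0 < ρ) (hρ1 : ρ < 1) {R : ℝ} (hR : ∀ x, S.r x ≤ R) :
    ∫ x, g x ∂μ ≤ ρ * (S.Ihat0 μ).toReal + (1 - ρ) * R := by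
  have hC1 : 1 ≤ C := by
    have x : E := Classical.arbitrary E
    have := hC 0 x
    rwa [hw0] at this
  obtain ⟨m, hm⟩ : ∃ m : ℕ, ρ ^ m < 1 / C := exists_pow_lt_of_lt_one (by positivity) hρ1
  set u : E → ℝ := fun x => ∑ i ∈ Finset.range (m + 1), ρ ^ i * w i x with hu
  have huc : Continuous u := by fun_prop
  have hu1 : ∀ x, 1 ≤ u x := by
    intro x
    simp only [hu]
    rw [Finset.sum_range_succ']
    have : 0 ≤ ∑ i ∈ Finset.range m, ρ ^ (i + 1) * w (i + 1) x :=
      Finset.sum_nonneg fun i _ => mul_nonneg (by positivity) (hwn _ _)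
    simp only [pow_zero, hw0]
    linarith
  have hk : ∀ x, 0 < S.r x - g x := fun x => by linarith [hg x]
  have hpu : ∀ x, ρ * S.r x * S.Pop u x ≤ (S.r x - g x) * u x := by
    intro x
    have h1 : ρ * (S.r x / (S.r x - g x) * S.Pop u x) =
        ∑ i ∈ Finset.range (m + 1), ρ ^ (i + 1) * w (i + 1) x := by
      rw [hu, S.Pop_finsum _ _ hw, Finset.mul_sum, Finset.mul_sum]
      refine Finset.sum_congr rfl fun i _ => ?_
      rw [hws, pow_succ]; ring
    have h2 : ∑ i ∈ Finset.range (m + 1), ρ ^ (i + 1) * w (i + 1) x + 1 =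
        u x + ρ ^ (m + 1) * w (m + 1) x := by
      have e1 := Finset.sum_range_succ' (fun i => ρ ^ i * w i x) (m + 1)
      have e2 := Finset.sum_range_succ (fun i => ρ ^ i * w i x) (m + 1)
      simp only [pow_zero, hw0, mul_one] at e1
      rw [← e1, e2]
    have h3 : ρ ^ (m + 1) * w (m + 1) x ≤ 1 := by
      calc ρ ^ (m + 1) * w (m + 1) x ≤ (1 / C) * C := by
            gcongr
            · exact hwn _ _
            · refine le_trans ?_ hm.le
              exact pow_le_pow_of_le_one hρ0.le hρ1.le (Nat.le_succ m)
            · exact hC _ _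
        _ = 1 := by field_simp
    have h4 : ρ * (S.r x / (S.r x - g x) * S.Pop u x) ≤ u x := by linarith
    have h5 : ρ * (S.r x / (S.r x - g x) * S.Pop u x) = (ρ * S.r x * S.Pop u x) / (S.r x - g x) := by
      ring
    rw [h5, div_le_iff₀ (hk x)] at h4
    linarith
  let φ : C(E, ℝ) := ⟨fun x => Real.log (u x), huc.log fun x => by linarith [hu1 x]⟩
  have hφ : ∀ x, g x - (1 - ρ) * R ≤ ρ * S.gphi φ x := by
    intro x
    have hux : 0 < u x := by linarith [hu1 x]
    have e : S.gphi φ x = S.r x - S.r x * S.Pop u x / u x := by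
      have e1 : (fun y => Real.exp (φ y)) = u := by
        ext y
        exact Real.exp_log (by linarith [hu1 y])
      have e2 : Real.exp (-φ x) = (u x)⁻¹ := by
        rw [Real.exp_neg]
        congr 1
        exact Real.exp_log hux
      change S.r x - S.r x * S.Pop (fun y => Real.exp (φ y)) x * Real.exp (- φ x) = _
      rw [e1, e2]; rfl
    have h1 : ρ * (S.r x * S.Pop u x / u x) ≤ S.r x - g x := by
      rw [← mul_div_assoc, div_le_iff₀ hux]
      linarith [hpu x]
    rw [e, mul_sub]
    have : (1 - ρ) * S.r x ≤ (1 - ρ) * R := by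
      have := hR x
      gcongr
    linarith
  have h1 : ∫ x, (g x - (1 - ρ) * R) ∂μ ≤ ∫ x, ρ * S.gphi φ x ∂μ :=
    integral_mono (int_of_cont μ (by fun_prop)) (int_of_cont μ (by fun_prop)) hφ
  rw [integral_sub (int_of_cont μ (by fun_prop)) (integrable_const _), integral_const_mul ρ] at h1
  simp only [integral_const, probReal_univ, one_smul] at h1
  have h2 := mul_le_mul_of_nonneg_left (S.gphi_le μ hI φ) hρ0.le
  linarith

variable {V : Type*} [NormedAddCommGroup V] [NormedSpace ℝ V] [MeasurableSpace V] [BorelSpace V]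
  [SecondCountableTopology V]

lemma LF_le {F : E → V} (hF : Continuous F) (L : V →L[ℝ] ℝ)
    (hfin : S.Av (S.Dop F (fun q => ENNReal.ofReal (Real.exp (L q.2)))) 0 ≠ ∞) (x : E) :
    L (F x) ≤ S.r x := by
  have hm : Measurable (fun x : E => S.Dop F (fun q => ENNReal.ofReal (Real.exp (L q.2))) (x, 0)) := by
    have h1 : Measurable (fun q : E × V => ENNReal.ofReal (Real.exp (L q.2))) := by fun_prop
    exact (measurable_Dop hF.measurable h1).comp (measurable_id.prodMk measurable_const)
  have hae := ae_lt_top hm hfin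
  have hae2 : ∀ᵐ x ∂S.lam, L (F x) ≤ S.r x := by
    filter_upwards [hae, S.lam_r_pos] with x hx hr
    by_contra hcon
    push Not at hcon
    have e := S.Dop_snd F (fun v => ENNReal.ofReal (Real.exp (L v))) x 0
    rw [e] at hx
    have : ∫⁻ s in Ioi (0 : ℝ), ENNReal.ofReal (S.r x) ≤ ∫⁻ s in Ioi (0 : ℝ),
        ENNReal.ofReal (S.r x * Real.exp (-(S.r x * s))) * ENNReal.ofReal (Real.exp (L (0 + s • F x))) := by
      refine setLIntegral_mono' measurableSet_Ioi fun s hs => ?_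
      rw [← ENNReal.ofReal_mul (by positivity)]
      refine ENNReal.ofReal_le_ofReal ?_
      rw [mul_assoc, ← Real.exp_add, zero_add, map_smul, smul_eq_mul]
      have h0 : (0:ℝ) ≤ -(S.r x * s) + s * L (F x) := by
        have : (0:ℝ) < s := hs
        nlinarith
      have := Real.one_le_exp h0
      nlinarith
    rw [setLIntegral_const, Real.volume_Ioi, ENNReal.mul_top (by simpa using hr)] at this
    exact absurd (lt_of_le_of_lt this hx) (lt_irrefl _)
  by_contra hcon
  push Not at hcon
  have hopen : IsOpen {x | S.r x < L (F x)} := isOpen_lt S.r_cont (L.continuous.comp hF)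
  have := S.lam_pos _ hopen ⟨x, hcon⟩
  rw [ae_iff] at hae2
  simp only [not_le] at hae2
  exact this.ne' hae2

lemma Dop_tensor (F : E → V) (L : V →L[ℝ] ℝ) {w : E → ℝ} (hw : Continuous w) (hw0 : ∀ x, 0 ≤ w x)
    (x : E) (hk : 0 < S.r x - L (F x)) (v : V) :
    S.Dop F (fun q => ENNReal.ofReal (w q.1) * ENNReal.ofReal (Real.exp (L q.2))) (x, v) =
      ENNReal.ofReal (S.r x / (S.r x - L (F x)) * S.Pop w x) * ENNReal.ofReal (Real.exp (L v)) := by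
  set k := S.r x - L (F x) with hkd
  have hPop : 0 ≤ S.Pop w x := integral_nonneg fun y => mul_nonneg (S.p_pos x y).le (hw0 y)
  have hr := S.r_nonneg x
  unfold Dop
  dsimp only
  have e : ∀ s : ℝ, ∫⁻ y, S.dens x s y * (ENNReal.ofReal (w y) * ENNReal.ofReal (Real.exp (L (v + s • F x)))) ∂S.lam
      = ENNReal.ofReal (S.r x / k * S.Pop w x * Real.exp (L v)) * ENNReal.ofReal (k * Real.exp (-(k * s))) := by
    intro s
    have e1 : ∀ y, S.dens x s y * (ENNReal.ofReal (w y) * ENNReal.ofReal (Real.exp (L (v + s • F x)))) =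
      (ENNReal.ofReal (S.r x * Real.exp (-(S.r x * s))) * ENNReal.ofReal (Real.exp (L (v + s • F x)))) *
        (ENNReal.ofReal (S.p x y) * ENNReal.ofReal (w y)) := by
      intro y; unfold dens; ring
    simp only [e1]
    rw [lintegral_const_mul' _ _ (by finiteness), S.Pop_lint x hw hw0,
      ← ENNReal.ofReal_mul (by positivity), ← ENNReal.ofReal_mul (by positivity),
      ← ENNReal.ofReal_mul (by positivity)]
    congr 1
    have e2 : Real.exp (L (v + s • F x)) = Real.exp (L v) * Real.exp (-(k * s)) * Real.exp (S.r x * s) := by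
      rw [← Real.exp_add, ← Real.exp_add, map_add, map_smul, smul_eq_mul, hkd]
      congr 1; ring
    have e3 : Real.exp (-(S.r x * s)) * Real.exp (S.r x * s) = 1 := by
      rw [← Real.exp_add]; simp
    rw [e2]
    field_simp
    linear_combination (S.r x * S.Pop w x) * e3
  simp only [e]
  rw [lintegral_const_mul' _ _ (by finiteness), lint_exp_Ioi hk, ← ENNReal.ofReal_mul (by positivity),
    ← ENNReal.ofReal_mul (by positivity)]
  simp

/-- iterates -/
def wseq (g : E → ℝ) : ℕ → E → ℝ
  | 0 => fun _ => 1
  | n + 1 => fun x => S.r x / (S.r x - g x) * S.Pop (wseq g n) x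

lemma wseq_cont {g : E → ℝ} (hg : Continuous g) (hk : ∀ x, 0 < S.r x - g x) (n : ℕ) :
    Continuous (S.wseq g n) := by
  induction n with
  | zero => exact continuous_const
  | succ n ih =>
    exact (S.r_cont.div (S.r_cont.sub hg) fun x => (hk x).ne').mul (S.Pop_cont ih)

lemma wseq_nonneg {g : E → ℝ} (hk : ∀ x, 0 < S.r x - g x) (n : ℕ) (x : E) :
    0 ≤ S.wseq g n x := by
  induction n generalizing x with
  | zero => exact zero_le_one
  | succ n ih =>
    exact mul_nonneg (div_nonneg (S.r_nonneg x) (hk x).le)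
      (integral_nonneg fun y => mul_nonneg (S.p_pos x y).le (ih y))

lemma Dop_iter_wseq {F : E → V} (hF : Continuous F) (L : V →L[ℝ] ℝ)
    (hk : ∀ x, 0 < S.r x - L (F x)) (n : ℕ) :
    (S.Dop F)^[n] (fun q => ENNReal.ofReal (Real.exp (L q.2))) = fun q =>
      ENNReal.ofReal (S.wseq (fun x => L (F x)) n q.1) * ENNReal.ofReal (Real.exp (L q.2)) := by
  induction n with
  | zero => ext q; simp [wseq]
  | succ n ih =>
    rw [Function.iterate_succ_apply', ih]
    ext ⟨x, v⟩
    rw [S.Dop_tensor F L (S.wseq_cont (g := fun x => L (F x)) (L.continuous.comp hF) hk n) (S.wseq_nonneg hk n) x (hk x)]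
    rfl

lemma wseq_bound {F : E → V} (hF : Continuous F) (L : V →L[ℝ] ℝ) {δ : ℝ} (hδ : 0 < δ)
    (hk : ∀ x, L (F x) + δ ≤ S.r x) {C : ℝ≥0∞} (hC : C ≠ ∞)
    (hb : ∀ n, S.Av ((S.Dop F)^[n] (fun q => ENNReal.ofReal (Real.exp (L q.2)))) 0 ≤ C) :
    ∃ C' : ℝ, ∀ n x, S.wseq (fun x => L (F x)) n x ≤ C' := by
  have hk' : ∀ x, 0 < S.r x - L (F x) := fun x => by linarith [hk x]
  have hwc := S.wseq_cont (g := fun x => L (F x)) (L.continuous.comp hF) hk'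
  have hwn := S.wseq_nonneg (g := fun x => L (F x)) hk'
  obtain ⟨R, hR0, hR⟩ := S.exists_r_bound
  obtain ⟨Q, hQ⟩ := (isCompact_range S.p_cont).isBounded.exists_norm_le
  have hQ' : ∀ x y, S.p x y ≤ Q := fun x y => (le_abs_self _).trans (hQ _ ⟨(x, y), rfl⟩)
  have hQ0 : 0 ≤ Q := (norm_nonneg _).trans (hQ _ ⟨(Classical.arbitrary E, Classical.arbitrary E), rfl⟩)
  have hint : ∀ n, ∫ y, S.wseq (fun x => L (F x)) n y ∂S.lam ≤ C.toReal := by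
    intro n
    rw [← ENNReal.ofReal_le_iff_le_toReal hC, ofReal_integral_eq_lintegral_ofReal
      (int_of_cont _ (hwc n)) (Filter.Eventually.of_forall (hwn n))]
    refine le_trans (le_of_eq ?_) (hb n)
    rw [S.Dop_iter_wseq hF L hk']
    simp [Av]
  refine ⟨max 1 (R / δ * (Q * C.toReal)), fun n x => ?_⟩
  cases n with
  | zero => exact le_max_left _ _
  | succ n =>
    refine le_trans ?_ (le_max_right _ _)
    have hP : S.Pop (S.wseq (fun x => L (F x)) n) x ≤ Q * C.toReal := by
      have h1 : S.Pop (S.wseq (fun x => L (F x)) n) x ≤ ∫ y, Q * S.wseq (fun x => L (F x)) n y ∂S.lam := by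
        refine integral_mono (int_of_cont _ ((S.p_cont_right x).mul (hwc n)))
          (int_of_cont _ (continuous_const.mul (hwc n))) fun y => ?_
        exact mul_le_mul_of_nonneg_right (hQ' x y) (hwn n y)
      rw [integral_const_mul] at h1
      exact h1.trans (mul_le_mul_of_nonneg_left (hint n) hQ0)
    have hP0 : 0 ≤ S.Pop (S.wseq (fun x => L (F x)) n) x :=
      integral_nonneg fun y => mul_nonneg (S.p_pos x y).le (hwn n y)
    change S.r x / (S.r x - L (F x)) * S.Pop (S.wseq (fun x => L (F x)) n) x ≤ _
    refine mul_le_mul ?_ hP hP0 (by positivity)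
    exact div_le_div₀ hR0.le (hR x) hδ (by linarith [hk x])

lemma mem_closure_Kset [FiniteDimensional ℝ V] {F : E → V} (hF : Continuous F) (tt : V →L[ℝ] ℝ)
    (htt : ∀ x, tt (F x) = 1) {c η : ℝ} (hc0 : 0 < c) (hc1 : c ≤ 1)
    (hc : ∀ x y, c ≤ S.p x y) (hη : 0 < η) (μ : Measure E) [IsProbabilityMeasure μ]
    (hI : S.Ihat0 μ ≠ ∞) {h : ℝ} (hh : (S.Ihat0 μ).toReal < h) :
    (∫ x, F x ∂μ, h) ∈ closure {w : V × ℝ | ∃ N : ℕ, 0 < N ∧ (N : ℝ) • w ∈ S.Kset F tt c η} := by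
  by_contra hcon
  obtain ⟨l, hl1, hl2⟩ := S.exists_ell F tt hc0 hc1 hc _ h hcon
  obtain ⟨R0, hR0⟩ := (isCompact_range hF).isBounded.exists_norm_le
  have hR : ∀ x, ‖F x‖ ≤ max R0 1 := fun x => (hR0 _ ⟨x, rfl⟩).trans (le_max_left _ _)
  set I := (S.Ihat0 μ).toReal
  have hI0 : 0 ≤ I := ENNReal.toReal_nonneg
  set v := ∫ x, F x ∂μ with hv
  set ε := (l v - I) / 4 with hε
  have hε0 : 0 < ε := by rw [hε]; linarith
  have hcb := fun {ε : ℝ} (hε : 0 < ε) => S.cover_bound hF.measurable tt (R := max R0 1) (by positivity)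
    htt hR hc0 hη l hl2 hε
  have hLe : ∀ a : ℝ, ∀ v, (l - a • tt) v = l v - a * tt v := fun a v => by simp
  have h1 : ∀ x, l (F x) - ε ≤ S.r x := by
    intro x
    obtain ⟨C, hC, hb⟩ := hcb hε0
    have := S.LF_le hF (l - ε • tt) (by
      simp only [hLe]
      exact ne_top_of_le_ne_top hC (hb 1)) x
    simpa [htt] using this
  set L := l - (2 * ε) • tt with hL
  have hLF : ∀ x, L (F x) = l (F x) - 2 * ε := fun x => by rw [hL, hLe, htt, mul_one]
  have h2 : ∀ x, L (F x) + ε ≤ S.r x := fun x => by rw [hLF]; linarith [h1 x]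
  obtain ⟨C, hC, hb⟩ := hcb (show 0 < 2 * ε by positivity)
  obtain ⟨C', hC'⟩ := S.wseq_bound hF L hε0 h2 hC (fun n => by
    simp only [hL, hLe]
    exact hb n)
  have hk' : ∀ x, 0 < S.r x - L (F x) := fun x => by linarith [h2 x]
  obtain ⟨R, hRp, hRr⟩ := S.exists_r_bound
  set δ := min (1 / 2) (ε / (2 * (R + 1))) with hδ
  have hδ0 : 0 < δ := lt_min (by norm_num) (by positivity)
  have hδ1 : δ ≤ 1 / 2 := min_le_left _ _
  have hδR : δ * R ≤ ε := by
    have : δ ≤ ε / (2 * (R + 1)) := min_le_right _ _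
    rw [le_div_iff₀ (by positivity)] at this
    nlinarith
  have hfin := S.superharm ⟨fun x => L (F x), L.continuous.comp hF⟩ hε0 h2
    (w := S.wseq (fun x => L (F x))) (S.wseq_cont (L.continuous.comp hF) hk') (fun x => rfl)
    (S.wseq_nonneg hk') (fun n x => rfl) hC' μ hI (ρ := 1 - δ) (by linarith) (by linarith) hRr
  have hFi : Integrable F μ := by
    refine Integrable.of_bound hF.measurable.aestronglyMeasurable (max R0 1)
      (Filter.Eventually.of_forall hR)
  have e : ∫ x, L (F x) ∂μ = l v - 2 * ε := by
    have hli : ∫ x, l (F x) ∂μ = l v := by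
      rw [hv]; exact l.integral_comp_comm hFi
    simp only [hLF]
    rw [integral_sub (l.integrable_comp hFi) (integrable_const _), hli]
    simp
  simp only [ContinuousMap.coe_mk] at hfin
  rw [e] at hfin
  have h3 : (1 - δ) * I ≤ I := by nlinarith
  have h4 : (1 - (1 - δ)) * R ≤ ε := by linarith
  linarith

end ChainSetting
end Key

section Lower
namespace ChainSetting
variable (S : ChainSetting E)
variable {V : Type*} [NormedAddCommGroup V] [NormedSpace ℝ V] [MeasurableSpace V] [BorelSpace V]
  [SecondCountableTopology V]

lemma exists_block [FiniteDimensional ℝ V] {F : E → V} (hF : Continuous F) (tt : V →L[ℝ] ℝ)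
    (htt : ∀ x, tt (F x) = 1) {c η : ℝ} (hc0 : 0 < c) (hc1 : c ≤ 1)
    (hc : ∀ x y, c ≤ S.p x y) (hη : 0 < η) (μ : Measure E) [IsProbabilityMeasure μ]
    (hI : S.Ihat0 μ ≠ ∞) {h : ℝ} (hh : (S.Ihat0 μ).toReal < h) :
    ∃ N n : ℕ, 0 < N ∧ ENNReal.ofReal (Real.exp (-(N * h))) ≤ ENNReal.ofReal c *
      S.Mn F n (Metric.closedBall ((N : ℝ) • ∫ x, F x ∂μ) (N * η)) := by
  set v := ∫ x, F x ∂μ with hv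
  set I := (S.Ihat0 μ).toReal with hId
  set B := ‖tt‖ * (‖v‖ + 1) with hB
  have hB0 : 0 ≤ B := by positivity
  have hη' : 0 < η / (2 * (B + 1)) := by positivity
  have hcl := S.mem_closure_Kset hF tt htt hc0 hc1 hc hη' μ hI (h := (I + h) / 2) (by linarith)
  rw [← hv, Metric.mem_closure_iff] at hcl
  set ε := min (min 1 (η / 2)) ((h - I) / 2) with hε
  have hε0 : 0 < ε := lt_min (lt_min one_pos (by positivity)) (by linarith)
  have hε1 : ε ≤ 1 := (min_le_left _ _).trans (min_le_left _ _)
  have hε2 : ε ≤ η / 2 := (min_le_left _ _).trans (min_le_right _ _)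
  have hε3 : ε ≤ (h - I) / 2 := min_le_right _ _
  obtain ⟨⟨w, k⟩, ⟨N, hN, n, hn⟩, hd⟩ := hcl ε hε0
  rw [Prod.dist_eq, max_lt_iff] at hd
  obtain ⟨hd1, hd2⟩ := hd
  simp only at hd1 hd2
  rw [dist_eq_norm] at hd1
  rw [Real.dist_eq, abs_lt] at hd2
  simp only [Prod.smul_mk, smul_eq_mul] at hn
  refine ⟨N, n, hN, ?_⟩
  have hN0 : (0 : ℝ) < N := Nat.cast_pos.2 hN
  have hw : ‖w‖ ≤ ‖v‖ + 1 := by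
    have := norm_sub_norm_le w v
    rw [norm_sub_rev] at this
    linarith
  have htw : tt w ≤ B := by
    have := (le_abs_self _).trans (tt.le_opNorm w)
    exact this.trans (by rw [hB]; gcongr)
  refine le_trans ?_ (hn.trans ?_)
  · refine ENNReal.ofReal_le_ofReal (Real.exp_le_exp.2 ?_)
    have : k ≤ h := by linarith
    have := mul_le_mul_of_nonneg_left this hN0.le
    linarith
  · gcongr
    refine S.Mn_mono F n (Metric.closedBall_subset_closedBall' ?_)
    rw [dist_eq_norm, ← smul_sub, norm_smul, norm_sub_rev, Real.norm_of_nonneg hN0.le, map_smul,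
      smul_eq_mul]
    have h1 : η / (2 * (B + 1)) * tt w ≤ η / 2 := by
      calc η / (2 * (B + 1)) * tt w ≤ η / (2 * (B + 1)) * (B + 1) := by
            gcongr; linarith
        _ = η / 2 := by field_simp
    have h2 := mul_le_mul_of_nonneg_left h1 hN0.le
    have h3 := mul_le_mul_of_nonneg_left (hd1.le.trans hε2) hN0.le
    nlinarith

lemma iter_block {F : E → V} {c η : ℝ} (hc1 : c ≤ 1) (hc : ∀ x y, c ≤ S.p x y) {N n : ℕ} {v : V}
    {h : ℝ} (hb : ENNReal.ofReal (Real.exp (-(N * h))) ≤ ENNReal.ofReal c *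
      S.Mn F n (Metric.closedBall ((N : ℝ) • v) (N * η))) (j : ℕ) (hj : 1 ≤ j) :
    ENNReal.ofReal (Real.exp (-(j * N * h))) ≤ ENNReal.ofReal c *
      S.Mn F (j * n) (Metric.closedBall ((j * N : ℝ) • v) (j * N * η)) := by
  induction j, hj using Nat.le_induction with
  | base => simpa using hb
  | succ j hj ih =>
    rw [Nat.succ_mul]
    refine le_trans ?_ (S.Mn_add F hc1 hc (j * n) n
      (B := Metric.closedBall ((j * N : ℝ) • v) (j * N * η))
      (B' := Metric.closedBall ((N : ℝ) • v) (N * η)) ?_)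
    · refine le_trans (le_of_eq ?_) (mul_le_mul' ih hb)
      rw [← ENNReal.ofReal_mul (Real.exp_pos _).le, ← Real.exp_add]
      congr 2
      push_cast; ring
    · intro b hb1 b' hb2
      rw [mem_closedBall_iff_norm] at *
      have e : b' + b - ((((j + 1 : ℕ) : ℝ)) * N) • v = (b' - (N : ℝ) • v) + (b - (j * N : ℝ) • v) := by
        push_cast
        rw [add_mul, one_mul, add_smul]; abel
      rw [e]
      refine (norm_add_le _ _).trans ?_
      push_cast
      linarith

lemma first_step {x : E} {P : Measure (Traj E)} (hP : IsChainLaw S.r S.skel x P) (hx : 0 < S.r x)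
    {F : E → V} (hF : Measurable F) {R : ℝ} (hR : ∀ x, ‖F x‖ ≤ R) {c : ℝ}
    (hc : ∀ x y, c ≤ S.p x y) (m : ℕ) (a : V) (ρ : ℝ) :
    ENNReal.ofReal (1 - Real.exp (- S.r x)) * (ENNReal.ofReal c * S.Mn F m (Metric.closedBall a ρ)) ≤
      P {ω | Sn F (1 + m) ω ∈ Metric.closedBall a (ρ + R)} := by
  set B' := Metric.closedBall a (ρ + R)
  have hB' : MeasurableSet B' := measurableSet_closedBall
  set h : E × V → ℝ≥0∞ := fun q => B'.indicator 1 q.2 with hh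
  have hhm : Measurable h := (measurable_one.indicator hB').comp measurable_snd
  have e := law_Dop hP hx (1 + m) hF hhm
  have e1 : P {ω | Sn F (1 + m) ω ∈ B'} = ∫⁻ ω, h (ω.1 (1 + m), Sn F (1 + m) ω) ∂P := by
    exact (lintegral_indicator_one (measurable_Sn hF (1 + m) hB')).symm
  have e2 : (S.Dop F)^[1 + m] h = S.Dop F ((S.Dop F)^[m] h) := by
    rw [add_comm, Function.iterate_succ_apply']
  rw [e1, e, e2]
  refine le_trans ?_ (S.Dop_ge_Av F hc _ _)
  rw [S.Dop_snd]
  have h1 : ENNReal.ofReal (1 - Real.exp (- S.r x)) * S.Mn F m (Metric.closedBall a ρ) ≤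
      ∫⁻ s in Ioi (0 : ℝ), ENNReal.ofReal (S.r x * Real.exp (-(S.r x * s))) *
        S.Av ((S.Dop F)^[m] h) (0 + s • F x) := by
    refine le_trans ?_ (lintegral_mono_set (show Ioc (0 : ℝ) 1 ⊆ Ioi 0 from Ioc_subset_Ioi_self))
    have e3 := lint_exp_Ioc hx zero_le_one
    rw [mul_one] at e3
    rw [← e3, ← lintegral_mul_const _ (by fun_prop)]
    refine setLIntegral_mono' measurableSet_Ioc fun s hs => ?_
    gcongr
    refine S.Mn_shift F m _ fun b hb => ?_
    rw [mem_closedBall_iff_norm] at *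
    have e4 : b + (0 + s • F x) - a = (b - a) + s • F x := by rw [zero_add]; abel
    rw [e4]
    refine (norm_add_le _ _).trans (add_le_add hb ?_)
    rw [norm_smul, Real.norm_of_nonneg hs.1.le]
    calc s * ‖F x‖ ≤ 1 * R := mul_le_mul hs.2 (hR x) (norm_nonneg _) zero_le_one
      _ = R := one_mul R
  calc _ = ENNReal.ofReal c * (ENNReal.ofReal (1 - Real.exp (- S.r x)) *
        S.Mn F m (Metric.closedBall a ρ)) := by ring
    _ ≤ _ := mul_le_mul_right h1 _

/-- deterministic inclusion -/
lemma path_near {ι : Type*} [Fintype ι] (f : ι → C(E, ℝ)) (mm : ι → ℝ) {R η ε N T : ℝ} {j : ℕ}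
    (hR1 : 1 ≤ R) (hf : ∀ i, ‖f i‖ ≤ R) (hm : ∀ i, |mm i| ≤ R) (hη : 0 < η) (hη1 : η ≤ 1 / 4)
    (hηε : η * (7 * R + 2) < ε) (hT : 0 < T) (hN : 0 < N) (hTN : N + R ≤ η * T)
    (hj1 : j * N ≤ (1 - 2 * η) * T) (hj2 : (1 - 2 * η) * T ≤ (j + 1) * N)
    (ω : Traj E) (hω : ∀ i, ω.2 i ≠ ∞) (M : ℕ)
    (hS : Sn (fun x => ((1 : ℝ), fun i => f i x)) M ω ∈
      Metric.closedBall ((j * N : ℝ) • ((1 : ℝ), mm)) (j * N * η + R)) (i : ι) :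
    |(∫ x, f i x ∂((toPM (empMeas T ω) : ProbabilityMeasure E) : Measure E)) - mm i| < ε := by
  have h1 := Sn_map (ContinuousLinearMap.fst ℝ ℝ (ι → ℝ)) (fun x : E => ((1 : ℝ), fun i => f i x)) M ω
  have h2 := Sn_map ((ContinuousLinearMap.proj (R := ℝ) (φ := fun _ : ι => ℝ) i).comp
    (ContinuousLinearMap.snd ℝ ℝ (ι → ℝ))) (fun x : E => ((1 : ℝ), fun i => f i x)) M ω
  simp only [ContinuousLinearMap.coe_fst', ContinuousLinearMap.coe_comp', Function.comp_apply,
    ContinuousLinearMap.coe_snd', ContinuousLinearMap.proj_apply] at h1 h2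
  set Z := Sn (fun x => ((1 : ℝ), fun i => f i x)) M ω with hZ
  rw [mem_closedBall_iff_norm] at hS
  have hS1 : |Z.1 - j * N| ≤ j * N * η + R := by
    have := (norm_fst_le _).trans hS
    simpa using this
  have hS2 : |Z.2 i - j * N * mm i| ≤ j * N * η + R := by
    have := ((norm_le_pi_norm _ i).trans (norm_snd_le _)).trans hS
    simpa using this
  set s1 := Sn (fun _ : E => (1 : ℝ)) M ω with hs1
  have hJ := jumpTime_eq ω hω M
  rw [← hs1] at hJ
  rw [h1] at hS1
  rw [h2] at hS2
  rw [abs_le] at hS1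
  have hj0 : 0 ≤ j * N := by positivity
  have hsT : s1 ≤ T := by nlinarith
  have hnear := integral_pos_near (f i) ω M T hT.le (by rw [hJ]; exact ENNReal.ofReal_le_ofReal hsT)
  rw [hJ, ENNReal.toReal_ofReal (Sn_one_nonneg ω M)] at hnear
  change |(∫ t in (0 : ℝ)..T, f i (Traj.pos t ω)) - Sn (fun x => f i x) M ω| ≤ _ at hnear
  rw [integral_toPM hT]
  set J := ∫ t in (0 : ℝ)..T, f i (Traj.pos t ω) with hJd
  set q := Sn (fun x => f i x) M ω with hq
  have hηT : 0 < η * T := by positivity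
  have hjT : j * N ≤ T := by nlinarith
  have hjη : j * N * η ≤ η * T := by nlinarith
  have hTs : T - s1 ≤ 4 * (η * T) := by nlinarith
  have hTs0 : 0 ≤ T - s1 := by linarith
  have hn1 : |J - q| ≤ 4 * (η * T) * R := by
    refine hnear.trans ?_
    exact mul_le_mul hTs (hf i) (norm_nonneg _) (by positivity)
  have hn2 : |q - j * N * mm i| ≤ 2 * (η * T) := by linarith
  have hn3 : |(T - j * N) * mm i| ≤ 3 * (η * T) * R := by
    rw [abs_mul, abs_of_nonneg (by linarith)]
    exact mul_le_mul (by nlinarith) (hm i) (abs_nonneg _) (by positivity)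
  have hn4 : |J - T * mm i| ≤ (η * (7 * R + 2)) * T := by
    have e : J - T * mm i = (J - q) + (q - j * N * mm i) - (T - j * N) * mm i := by ring
    rw [e]
    refine (abs_sub _ _).trans ?_
    have := abs_add_le (J - q) (q - j * N * mm i)
    linarith
  have e : T⁻¹ * J - mm i = T⁻¹ * (J - T * mm i) := by field_simp
  rw [e, abs_mul, abs_of_pos (by positivity), inv_mul_lt_iff₀ hT]
  nlinarith

lemma lower_basic (P : E → Measure (Traj E)) (hP : ∀ x, IsChainLaw S.r S.skel x (P x))
    {ι : Type*} [Fintype ι] (f : ι → C(E, ℝ)) (μ : Measure E) [IsProbabilityMeasure μ]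
    (hI : S.Ihat0 μ ≠ ∞) {h : ℝ} (hh : (S.Ihat0 μ).toReal < h) {ε : ℝ} (hε : 0 < ε) :
    ∃ T0 : ℝ, ∀ T ≥ T0, ∀ x, 0 < S.r x →
      ENNReal.ofReal (1 - Real.exp (- S.r x)) * ENNReal.ofReal (Real.exp (-(T * h))) ≤
      P x {ω | ∀ i, |(∫ y, f i y ∂((toPM (empMeas T ω) : ProbabilityMeasure E) : Measure E)) -
        ∫ y, f i y ∂μ| < ε} := by
  obtain ⟨c, hc0, hc1, hc⟩ := S.exists_c
  have hh0 : 0 < h := lt_of_le_of_lt ENNReal.toReal_nonneg hh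
  set R : ℝ := 1 + ∑ i, ‖f i‖ with hRd
  have hsum0 : 0 ≤ ∑ i, ‖f i‖ := Finset.sum_nonneg fun _ _ => norm_nonneg _
  have hR1 : 1 ≤ R := by linarith
  have hfR : ∀ i, ‖f i‖ ≤ R := fun i => by
    have := Finset.single_le_sum (f := fun i => ‖f i‖) (fun _ _ => norm_nonneg _) (Finset.mem_univ i)
    linarith
  set F : E → ℝ × (ι → ℝ) := fun x => ((1 : ℝ), fun i => f i x) with hFd
  have hFc : Continuous F := by
    refine continuous_const.prodMk (continuous_pi fun i => (f i).continuous)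
  have hFR : ∀ x, ‖F x‖ ≤ R := by
    intro x
    rw [Prod.norm_mk, max_le_iff]
    refine ⟨by simpa using hR1, ?_⟩
    rw [pi_norm_le_iff_of_nonneg (by linarith)]
    exact fun i => ((f i).norm_coe_le_norm x).trans (hfR i)
  have hFi : Integrable F μ := Integrable.of_bound hFc.measurable.aestronglyMeasurable R
      (Filter.Eventually.of_forall hFR)
  set mm : ι → ℝ := fun i => ∫ y, f i y ∂μ with hmm
  have hmR : ∀ i, |mm i| ≤ R := by
    intro i
    have := norm_integral_le_of_norm_le_const (μ := μ) (f := fun y => f i y)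
      (Filter.Eventually.of_forall fun y => ((f i).norm_coe_le_norm y).trans (hfR i))
    simpa using this
  have hFint : ∫ x, F x ∂μ = ((1 : ℝ), mm) := by
    refine Prod.ext ?_ ?_
    · have := (ContinuousLinearMap.fst ℝ ℝ (ι → ℝ)).integral_comp_comm hFi
      simp only [ContinuousLinearMap.coe_fst'] at this
      rw [← this]
      simp [hFd]
    · ext i
      have := ((ContinuousLinearMap.proj (R := ℝ) (φ := fun _ : ι => ℝ) i).comp
        (ContinuousLinearMap.snd ℝ ℝ (ι → ℝ))).integral_comp_comm hFi
      simp only [ContinuousLinearMap.coe_comp', Function.comp_apply,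
        ContinuousLinearMap.coe_snd', ContinuousLinearMap.proj_apply] at this
      rw [← this]
  set η := min (1 / 4) (ε / (2 * (7 * R + 2))) with hη
  have hη0 : 0 < η := lt_min (by norm_num) (by positivity)
  have hη1 : η ≤ 1 / 4 := min_le_left _ _
  have hη2 : η * (7 * R + 2) < ε := by
    have : η ≤ ε / (2 * (7 * R + 2)) := min_le_right _ _
    rw [le_div_iff₀ (by positivity)] at this
    linarith
  obtain ⟨N, n, hN, hb⟩ := S.exists_block hFc (ContinuousLinearMap.fst ℝ ℝ (ι → ℝ)) (fun x => rfl)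
    hc0 hc1 hc hη0 μ hI hh
  rw [hFint] at hb
  have hN0 : (0 : ℝ) < N := Nat.cast_pos.2 hN
  refine ⟨max (2 * N) ((N + R) / η), fun T hT x hx => ?_⟩
  have hT1 : 2 * N ≤ T := (le_max_left _ _).trans hT
  have hT2 : N + R ≤ η * T := by
    have := (le_max_right _ _).trans hT
    rw [div_le_iff₀ hη0] at this
    linarith
  have hT0 : 0 < T := by linarith
  set j := ⌊(1 - 2 * η) * T / N⌋₊ with hj
  have hq0 : 0 ≤ (1 - 2 * η) * T / N := div_nonneg (mul_nonneg (by linarith) hT0.le) hN0.le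
  have hj1 : (j : ℝ) * N ≤ (1 - 2 * η) * T := by
    have := Nat.floor_le hq0
    rwa [le_div_iff₀ hN0] at this
  have hj2 : (1 - 2 * η) * T ≤ (j + 1) * N := by
    have := (Nat.lt_floor_add_one ((1 - 2 * η) * T / N)).le
    rwa [div_le_iff₀ hN0] at this
  have hj3 : 1 ≤ j := by
    rw [hj, Nat.one_le_floor_iff, le_div_iff₀ hN0]
    nlinarith
  have hbj := S.iter_block hc1 hc hb j hj3
  have hfs := S.first_step (hP x) hx hFc.measurable hFR hc (j * n) ((j * N : ℝ) • ((1 : ℝ), mm))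
    (j * N * η)
  have hprob := (hP x).prob
  calc _ ≤ ENNReal.ofReal (1 - Real.exp (- S.r x)) * (ENNReal.ofReal c *
      S.Mn F (j * n) (Metric.closedBall ((j * N : ℝ) • ((1 : ℝ), mm)) (j * N * η))) := by
        gcongr
        refine le_trans (ENNReal.ofReal_le_ofReal (Real.exp_le_exp.2 ?_)) hbj
        have : j * N * h ≤ T * h := by
          gcongr
          nlinarith
        linarith
    _ ≤ _ := hfs
    _ ≤ _ := by
        refine measure_mono_ae ?_
        have hall : ∀ᵐ ω ∂(P x), ∀ i, ω.2 i ≠ ∞ := ae_all_iff.2 fun i => tau_ne_top_ae (hP x) hx i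
        filter_upwards [hall] with ω hω hS
        intro i
        exact path_near f mm hR1 hfR hmR hη0 hη1 hη2 hT0 hN0 hT2 hj1 hj2 ω hω _ hS i

lemma exists_nhd (μ : ProbabilityMeasure E) (A : Set (ProbabilityMeasure E)) (hA : IsOpen A)
    (hμ : μ ∈ A) : ∃ (t : Finset C(E, ℝ)) (ε : ℝ), 0 < ε ∧ ∀ ν : ProbabilityMeasure E,
      (∀ f ∈ t, |(∫ y, f y ∂(ν : Measure E)) - ∫ y, f y ∂(μ : Measure E)| < ε) → ν ∈ A := by
  by_contra hcon
  push Not at hcon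
  have hid : Tendsto id (⨅ f : C(E, ℝ), comap (fun ν : ProbabilityMeasure E =>
      ∫ y, f y ∂(ν : Measure E)) (𝓝 (∫ y, f y ∂(μ : Measure E)))) (𝓝 μ) := by
    rw [ProbabilityMeasure.tendsto_iff_forall_integral_tendsto]
    intro f
    have := (tendsto_comap (f := fun ν : ProbabilityMeasure E => ∫ y, f.toContinuousMap y ∂(ν : Measure E))
      (x := 𝓝 (∫ y, f.toContinuousMap y ∂(μ : Measure E))))
    exact this.mono_left (iInf_le _ f.toContinuousMap)
  have hmem := hid (hA.mem_nhds hμ)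
  simp only [preimage_id, Filter.mem_map] at hmem
  rw [Filter.mem_iInf] at hmem
  obtain ⟨t, htf, W, hW, hWA⟩ := hmem
  choose U hU hUW using fun i => Filter.mem_comap.1 (hW i)
  choose ε hε hεU using fun i => Metric.mem_nhds_iff.1 (hU i)
  have hft : Finite t := htf
  obtain ⟨δ, hδ0, hδ⟩ : ∃ δ > 0, ∀ i, δ ≤ ε i := by
    have hft2 : Fintype t := htf.fintype
    by_cases hne : Nonempty t
    · obtain ⟨i0, hi0⟩ := Finite.exists_min ε
      exact ⟨ε i0, hε i0, hi0⟩
    · exact ⟨1, one_pos, fun i => (hne ⟨i⟩).elim⟩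
  obtain ⟨ν, hν, hνA⟩ := hcon htf.toFinset δ hδ0
  refine hνA ?_
  rw [hWA]
  refine mem_iInter.2 fun i => hUW i (hεU i ?_)
  rw [Metric.mem_ball, Real.dist_eq]
  exact (hν i (by simp)).trans_le (hδ i)

lemma lower_ldp (P : E → Measure (Traj E)) (hP : ∀ x, IsChainLaw S.r S.skel x (P x))
    (E₁ : Set E) (hcomp : IsCompact E₁) (hE₁ : E₁ ⊆ S.E0ᶜ) (A : Set (ProbabilityMeasure E))
    (hA : IsOpen A) :
    -(⨅ μ ∈ A, (S.Ihat0 (μ : Measure E) : EReal))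
          ≤ Filter.liminf (fun T : ℝ => ⨅ x ∈ E₁,
              ((1 / T : ℝ) : EReal) * ENNReal.log (P x {ω : Traj E | toPM (empMeas T ω) ∈ A}))
            atTop := by
  rw [EReal.neg_le]
  refine le_iInf₂ fun μ hμ => ?_
  refine le_of_forall_gt fun c hc => ?_
  obtain ⟨c', hc1, hc2⟩ := exists_between hc
  refine lt_of_le_of_lt ?_ hc2
  clear hc2 hc
  induction c' with
  | bot => simp at hc1
  | top => simp
  | coe h =>
  have hI : S.Ihat0 (μ : Measure E) ≠ ∞ := by
    intro hI; rw [hI] at hc1; simp at hc1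
  have hh : (S.Ihat0 (μ : Measure E)).toReal < h := by
    rw [← EReal.coe_lt_coe_iff]
    refine lt_of_le_of_lt (le_of_eq ?_) hc1
    rw [← EReal.toReal_coe_ennreal, EReal.coe_toReal (by simpa using hI) (by simp)]
  rw [EReal.neg_le]
  obtain ⟨κ, hκ0, hκ⟩ : ∃ κ : ℝ, 0 < κ ∧ ∀ x ∈ E₁, κ ≤ S.r x := by
    rcases E₁.eq_empty_or_nonempty with he | hne
    · exact ⟨1, one_pos, by simp [he]⟩
    · obtain ⟨x0, hx0, hmin⟩ := hcomp.exists_isMinOn hne S.r_cont.continuousOn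
      exact ⟨S.r x0, lt_of_le_of_ne (S.r_nonneg x0) fun h => hE₁ hx0 h.symm, fun x hx => hmin hx⟩
  obtain ⟨t, ε, hε, hν⟩ := exists_nhd μ A hA hμ
  obtain ⟨T0, hT0⟩ := S.lower_basic P hP (fun i : t => (i : C(E, ℝ))) (μ : Measure E) hI hh hε
  set K : ℝ := 1 - Real.exp (-κ) with hK
  have hK0 : 0 < K := by
    have : Real.exp (-κ) < 1 := Real.exp_lt_one_iff.2 (by linarith)
    linarith
  have hle : ∀ᶠ T : ℝ in atTop, ((Real.log K / T - h : ℝ) : EReal) ≤ (⨅ x ∈ E₁,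
      ((1 / T : ℝ) : EReal) * ENNReal.log (P x {ω : Traj E | toPM (empMeas T ω) ∈ A})) := by
    filter_upwards [eventually_gt_atTop 0, eventually_ge_atTop T0] with T hT hTT
    refine le_iInf₂ fun x hx => ?_
    have hx0 : 0 < S.r x := hκ0.trans_le (hκ x hx)
    have hb : ENNReal.ofReal (K * Real.exp (-(T * h))) ≤ P x {ω : Traj E | toPM (empMeas T ω) ∈ A} := by
      rw [ENNReal.ofReal_mul hK0.le]
      refine le_trans ?_ ((hT0 T hTT x hx0).trans (measure_mono fun ω hω => ?_))
      · gcongr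
        rw [hK]
        have := Real.exp_le_exp.2 (neg_le_neg (hκ x hx))
        linarith
      · exact hν _ fun f hf => hω ⟨f, hf⟩
    have h1 := ENNReal.log_le_log hb
    rw [ENNReal.log_ofReal_of_pos (by positivity), Real.log_mul hK0.ne' (Real.exp_pos _).ne',
      Real.log_exp] at h1
    calc _ = ((1 / T : ℝ) : EReal) * ((Real.log K + -(T * h) : ℝ) : EReal) := by
          rw [← EReal.coe_mul]
          congr 1
          field_simp
          ring
      _ ≤ _ := mul_le_mul_of_nonneg_left h1 (by exact_mod_cast (by positivity : 0 ≤ 1 / T))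
  refine le_trans ?_ (liminf_le_liminf hle)
  have hlim : Tendsto (fun T : ℝ => ((Real.log K / T - h : ℝ) : EReal)) atTop (𝓝 ((-h : ℝ) : EReal)) := by
    refine (continuous_coe_real_ereal.tendsto _).comp ?_
    have : Tendsto (fun T : ℝ => Real.log K / T) atTop (𝓝 0) := tendsto_const_nhds.div_atTop tendsto_id
    simpa using this.sub_const h
  rw [hlim.liminf_eq]
  simp

end ChainSetting
end Lower


/-- **Corollary 2.4** (large deviations of the empirical measure). Uniformly over `x` in
compact subsets of `E \ E₀`, the family `P_x ∘ μ_T⁻¹` satisfies as `T → ∞` a large deviation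
principle with convex rate function the Donsker-Varadhan functional `Î`. -/
theorem empirical_measure_ldp (S : ChainSetting E) (hiv : S.CondIV)
    (P : E → Measure (Traj E)) (hP : ∀ x, IsChainLaw S.r S.skel x (P x)) :
    (∀ (μ₁ μ₂ : Measure E) (a b : ℝ≥0∞), a + b = 1 →
      S.Ihat0 (a • μ₁ + b • μ₂) ≤ a * S.Ihat0 μ₁ + b * S.Ihat0 μ₂) ∧
    (∀ E₁ : Set E, IsCompact E₁ → E₁ ⊆ S.E0ᶜ →
      (∀ C : Set (ProbabilityMeasure E), IsClosed C →
        Filter.limsup (fun T : ℝ => ⨆ x ∈ E₁,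
            ((1 / T : ℝ) : EReal) * ENNReal.log (P x {ω : Traj E | toPM (empMeas T ω) ∈ C}))
          atTop ≤ -(⨅ μ ∈ C, (S.Ihat0 (μ : Measure E) : EReal))) ∧
      (∀ A : Set (ProbabilityMeasure E), IsOpen A →
        -(⨅ μ ∈ A, (S.Ihat0 (μ : Measure E) : EReal))
          ≤ Filter.liminf (fun T : ℝ => ⨅ x ∈ E₁,
              ((1 / T : ℝ) : EReal) * ENNReal.log (P x {ω : Traj E | toPM (empMeas T ω) ∈ A}))
            atTop)) := by
  exact ⟨S.Ihat_convex, fun E₁ hE hsub => ⟨fun C hC => S.upper_ldp P hP E₁ hsub C hC,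
    fun A hA => S.lower_ldp P hP E₁ hE hsub A hA⟩⟩

end
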